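/- arXiv:2105.05848 — 3 statements merged into one kernel-verified Lean document; each statement's English description precedes it below -/
import Mathlib

section
/- Let H be a real Hilbert space, α ∈ (0,1), λ ∈ ℝ, and T > 0. Let e : [0,T] → H be continuous with e(0) = 0, differentiable on (0,T), such that s ↦ (t−s)^{−α}‖e′(s)‖ is integrable on (0,t) for every t ∈ (0,T], and such that t ↦ ‖e(t)‖ is Lipschitz continuous on [ε, T] for every ε ∈ (0,T). Let r : (0,T] → ℝ be nonnegative and continuous, with s ↦ (t−s)^{α−1} E_{α,α}(−λ(t−s)^α) r(s) integrable on (0,t) for every t ∈ (0,T]. Suppose that for every t ∈ (0,T]: (1/Γ(1−α)) ⟨∫_0^t (t−s)^{−α} e′(s) ds, e(t)⟩ + λ ‖e(t)‖² ≤ r(t) ‖e(t)‖. Then for every t ∈ (0,T]: ‖e(t)‖ ≤ ∫_0^t (t−s)^{α−1} E_{α,α}(−λ(t−s)^α) r(s) ds. -/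
open MeasureTheory Real
open scoped RealInnerProductSpace

/-- The generalized Mittag-Leffler function `E_{a,b}(z) = ∑_{k≥0} z^k / Γ(ak + b)`. -/
noncomputable def mittagLeffler (a b z : ℝ) : ℝ := ∑' k : ℕ, z ^ k / Real.Gamma (a * k + b)

/-!
Write `v` for the a.e. derivative of `‖e‖`. A functional norming `e t` bounds the increments of
`‖e‖` over every interval ending at `t` by those of `e`, and the increasing weight `(t - s) ^ (-α)`
is a superposition of indicators of such intervals; hence the tested inequality for `e` yields the
scalar inequality `q * v ≤ r`, where `q` is the kernel of `D_t^α + λ` acting on derivatives and `*`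
is the Volterra convolution.

The kernel `k = t ^ (α - 1) E_{α,α}(-λ t ^ α)` satisfies `k * q = 1`, by termwise Beta integrals, so
`k * (q * v)` is the integral of `v`, that is `‖e‖`. It is also positive, so convolving `q * v ≤ r`
with it gives the bound. Its positivity is that of `E_{α,β}` on the negative half-line, and comes
from the Volterra equation satisfied by `E_{α,β}`: the kernel fades in time, so a solution cannot
reach a first zero.
-/
section VolterraConvolution

open Set

/-- The Laplace (causal) convolution `(k * f)(t) = ∫₀ᵗ k(t - s) f(s) ds` on the half-line, the
composition law of Volterra operators; it is `0` for `t ≤ 0`. -/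
noncomputable def volterraConv (k f : ℝ → ℝ) (t : ℝ) : ℝ :=
  ∫ s in Ioo 0 t, k (t - s) * f s

/-- Convergence of the integral defining `volterraConv k f t`, in analogy with
`ConvolutionExistsAt`. -/
def VolterraConvExistsAt (k f : ℝ → ℝ) (t : ℝ) : Prop :=
  IntegrableOn (fun s => k (t - s) * f s) (Ioo 0 t)

/-- Restriction of a kernel to positive times, extended by zero. It turns `volterraConv` into a
convolution over the whole line, where the changes of variables are those of Haar measure. -/
noncomputable def causal (k : ℝ → ℝ) : ℝ → ℝ := (Ioi 0).indicator k

lemma causal_of_pos (k : ℝ → ℝ) {x : ℝ} (hx : 0 < x) : causal k x = k x :=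
  indicator_of_mem (mem_Ioi.2 hx) k

lemma causal_of_nonpos (k : ℝ → ℝ) {x : ℝ} (hx : x ≤ 0) : causal k x = 0 :=
  indicator_of_notMem (notMem_Ioi.2 hx) k

lemma measurable_causal {k : ℝ → ℝ} (hk : Measurable k) : Measurable (causal k) :=
  hk.indicator measurableSet_Ioi

lemma causal_mul_causal_eq_indicator (k f : ℝ → ℝ) (t : ℝ) :
    (fun s => causal k (t - s) * causal f s) =
      (Ioo 0 t).indicator fun s => k (t - s) * f s := by
  funext s
  rcases le_or_gt s 0 with hs | hs
  · rw [causal_of_nonpos f hs, mul_zero, indicator_of_notMem fun h => hs.not_gt h.1]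
  rcases le_or_gt t s with hts | hts
  · rw [causal_of_nonpos k (sub_nonpos.2 hts), zero_mul,
      indicator_of_notMem fun h => hts.not_gt h.2]
  · rw [causal_of_pos f hs, causal_of_pos k (sub_pos.2 hts), indicator_of_mem (mem_Ioo.2 ⟨hs, hts⟩)]

lemma volterraConv_eq_integral_causal (k f : ℝ → ℝ) (t : ℝ) :
    volterraConv k f t = ∫ s, causal k (t - s) * causal f s := by
  rw [causal_mul_causal_eq_indicator, integral_indicator measurableSet_Ioo, volterraConv]

lemma volterraConvExistsAt_iff_integrable_causal {k f : ℝ → ℝ} {t : ℝ} :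
    VolterraConvExistsAt k f t ↔ Integrable fun s => causal k (t - s) * causal f s := by
  rw [causal_mul_causal_eq_indicator, integrable_indicator_iff measurableSet_Ioo,
    VolterraConvExistsAt]

lemma volterraConv_comm (k f : ℝ → ℝ) (t : ℝ) : volterraConv k f t = volterraConv f k t := by
  rw [volterraConv_eq_integral_causal, volterraConv_eq_integral_causal,
    ← integral_sub_left_eq_self _ volume t]
  simp only [sub_sub_cancel, mul_comm]

lemma VolterraConvExistsAt.symm {k f : ℝ → ℝ} {t : ℝ} (h : VolterraConvExistsAt k f t) :
    VolterraConvExistsAt f k t := by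
  rw [volterraConvExistsAt_iff_integrable_causal] at h ⊢
  simpa only [sub_sub_cancel, mul_comm] using h.comp_sub_left t

lemma volterraConv_add_left {k₁ k₂ f : ℝ → ℝ} {t : ℝ} (h₁ : VolterraConvExistsAt k₁ f t)
    (h₂ : VolterraConvExistsAt k₂ f t) :
    volterraConv (fun x => k₁ x + k₂ x) f t = volterraConv k₁ f t + volterraConv k₂ f t := by
  simp only [volterraConv, add_mul]
  exact integral_add h₁ h₂

lemma volterraConv_mono_right {k f g : ℝ → ℝ} {t : ℝ} (hk : ∀ x ∈ Ioo 0 t, 0 ≤ k x)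
    (hf : VolterraConvExistsAt k f t) (hg : VolterraConvExistsAt k g t)
    (hfg : ∀ s ∈ Ioo 0 t, f s ≤ g s) : volterraConv k f t ≤ volterraConv k g t :=
  setIntegral_mono_on hf hg measurableSet_Ioo fun s hs =>
    mul_le_mul_of_nonneg_left (hfg s hs)
      (hk _ ⟨sub_pos.2 hs.2, sub_lt_self t hs.1⟩)

section Associativity

variable {k q v : ℝ → ℝ} {t : ℝ}

lemma integral_causal_mul_causal_sub (k q : ℝ → ℝ) (t τ : ℝ) :
    ∫ s, causal k (t - s) * causal q (s - τ) = volterraConv k q (t - τ) := by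
  rw [volterraConv_eq_integral_causal,
    ← integral_sub_right_eq_self (fun x => causal k (t - τ - x) * causal q x) τ]
  simp only [sub_sub_sub_cancel_right]

lemma causal_mul_setIntegral_causal_eq_indicator (k q v : ℝ → ℝ) (t : ℝ) :
    (fun s => causal k (t - s) * ∫ τ in Ioo 0 t, causal q (s - τ) * v τ) =
      (Ioo 0 t).indicator fun s => k (t - s) * volterraConv q v s := by
  funext s
  rcases le_or_gt s 0 with hs | hs
  · rw [indicator_of_notMem fun h => hs.not_gt h.1, setIntegral_eq_zero_of_forall_eq_zero,
      mul_zero]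
    intro τ hτ
    rw [causal_of_nonpos q (sub_nonpos.2 (hs.trans hτ.1.le)), zero_mul]
  rcases le_or_gt t s with hts | hts
  · rw [causal_of_nonpos k (sub_nonpos.2 hts), zero_mul,
      indicator_of_notMem fun h => hts.not_gt h.2]
  · rw [indicator_of_mem (mem_Ioo.2 ⟨hs, hts⟩), causal_of_pos k (sub_pos.2 hts), volterraConv]
    congr 1
    rw [setIntegral_eq_of_subset_of_forall_sdiff_eq_zero measurableSet_Ioo
      (Ioo_subset_Ioo_right hts.le)]
    · refine setIntegral_congr_fun measurableSet_Ioo fun τ hτ => ?_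
      simp only [causal_of_pos q (sub_pos.2 hτ.2)]
    · intro τ hτ
      have hsτ : s ≤ τ := not_lt.1 fun h => hτ.2 ⟨hτ.1.1, h⟩
      rw [causal_of_nonpos q (sub_nonpos.2 hsτ), zero_mul]

lemma integrable_causal_mul_causal_mul {M : ℝ} (hk : Measurable k) (hq : Measurable q)
    (hv : IntegrableOn v (Ioo 0 t)) (hkq : ∀ x ∈ Ioo 0 t, VolterraConvExistsAt k q x)
    (hM : ∀ x ∈ Ioo 0 t, volterraConv (fun y => ‖k y‖) (fun y => ‖q y‖) x ≤ M) :
    Integrable (fun p : ℝ × ℝ => causal k (t - p.2) * (causal q (p.2 - p.1) * v p.1))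
      ((volume.restrict (Ioo 0 t)).prod volume) := by
  have hmeas : AEStronglyMeasurable
      (fun p : ℝ × ℝ => causal k (t - p.2) * (causal q (p.2 - p.1) * v p.1))
      ((volume.restrict (Ioo 0 t)).prod volume) := by
    have hk' := (measurable_causal hk).comp (measurable_snd.const_sub t : Measurable
      fun p : ℝ × ℝ => t - p.2)
    have hq' := (measurable_causal hq).comp (measurable_snd.sub measurable_fst : Measurable
      fun p : ℝ × ℝ => p.2 - p.1)
    exact hk'.aestronglyMeasurable.mul
      (hq'.aestronglyMeasurable.mul hv.aestronglyMeasurable.comp_fst)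
  have hreflect : ∀ τ ∈ Ioo 0 t, t - τ ∈ Ioo 0 t := fun τ hτ =>
    ⟨sub_pos.2 hτ.2, sub_lt_self t hτ.1⟩
  refine (integrable_prod_iff hmeas).2 ⟨?_, ?_⟩
  · refine ae_restrict_of_forall_mem measurableSet_Ioo fun τ hτ => ?_
    have hexists := volterraConvExistsAt_iff_integrable_causal.1 (hkq _ (hreflect τ hτ))
    simpa only [sub_sub_sub_cancel_right, mul_assoc] using
      (hexists.comp_sub_right τ).mul_const (v τ)
  · refine (hv.norm.const_mul M).mono' hmeas.norm.integral_prod_right' ?_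
    refine ae_restrict_of_forall_mem measurableSet_Ioo fun τ hτ => ?_
    have hsection : ∫ s, ‖causal k (t - s) * (causal q (s - τ) * v τ)‖ =
        volterraConv (fun y => ‖k y‖) (fun y => ‖q y‖) (t - τ) * ‖v τ‖ := by
      rw [← integral_causal_mul_causal_sub, ← integral_mul_const]
      simp only [causal, norm_mul, norm_indicator_eq_indicator_norm, mul_assoc]
    rw [norm_of_nonneg (integral_nonneg fun s => norm_nonneg _), hsection]
    exact mul_le_mul_of_nonneg_right (hM _ (hreflect τ hτ)) (norm_nonneg _)

lemma volterraConvExistsAt_volterraConv {M : ℝ} (hk : Measurable k) (hq : Measurable q)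
    (hv : IntegrableOn v (Ioo 0 t)) (hkq : ∀ x ∈ Ioo 0 t, VolterraConvExistsAt k q x)
    (hM : ∀ x ∈ Ioo 0 t, volterraConv (fun y => ‖k y‖) (fun y => ‖q y‖) x ≤ M) :
    VolterraConvExistsAt k (volterraConv q v) t := by
  have h := (integrable_causal_mul_causal_mul hk hq hv hkq hM).integral_prod_right
  simp only [integral_const_mul] at h
  rwa [causal_mul_setIntegral_causal_eq_indicator,
    integrable_indicator_iff measurableSet_Ioo] at h

theorem volterraConv_assoc {M : ℝ} (hk : Measurable k) (hq : Measurable q)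
    (hv : IntegrableOn v (Ioo 0 t)) (hkq : ∀ x ∈ Ioo 0 t, VolterraConvExistsAt k q x)
    (hM : ∀ x ∈ Ioo 0 t, volterraConv (fun y => ‖k y‖) (fun y => ‖q y‖) x ≤ M) :
    volterraConv (volterraConv k q) v t = volterraConv k (volterraConv q v) t := by
  calc volterraConv (volterraConv k q) v t
      = ∫ τ in Ioo 0 t, ∫ s, causal k (t - s) * (causal q (s - τ) * v τ) := by
        simp only [volterraConv, ← mul_assoc, integral_mul_const]
        simp only [integral_causal_mul_causal_sub, volterraConv]
    _ = ∫ s, ∫ τ in Ioo 0 t, causal k (t - s) * (causal q (s - τ) * v τ) :=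
        integral_integral_swap (integrable_causal_mul_causal_mul hk hq hv hkq hM)
    _ = volterraConv k (volterraConv q v) t := by
        simp only [integral_const_mul]
        rw [causal_mul_setIntegral_causal_eq_indicator, integral_indicator measurableSet_Ioo,
          volterraConv]

end Associativity

end VolterraConvolution

section RiemannLiouville

open Set

/-- The kernel `x^(β-1) / Γ(β)` of the Riemann–Liouville integral of order `β`, so that
`volterraConv (rlKernel β) f` is the `β`-fold integral of `f` from `0`. -/
noncomputable def rlKernel (β x : ℝ) : ℝ := x ^ (β - 1) / Gamma β

lemma measurable_rlKernel (β : ℝ) : Measurable (rlKernel β) :=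
  (measurable_id.pow_const (β - 1)).div_const (Gamma β)

lemma rlKernel_one (x : ℝ) : rlKernel 1 x = 1 := by
  rw [rlKernel, sub_self, rpow_zero, Gamma_one, div_one]

lemma rlKernel_pos {β x : ℝ} (hβ : 0 < β) (hx : 0 < x) : 0 < rlKernel β x :=
  div_pos (rpow_pos_of_pos hx _) (Gamma_pos_of_pos hβ)

lemma integral_rpow_sub_mul_rpow {a b t : ℝ} (ha : 0 < a) (hb : 0 < b) (ht : 0 < t) :
    ∫ s in Ioo 0 t, (t - s) ^ (a - 1) * s ^ (b - 1) =
      t ^ (a + b - 1) * (Gamma a * Gamma b / Gamma (a + b)) := by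
  have hbeta := Complex.betaIntegral_scaled (b : ℂ) (a : ℂ) ht
  rw [Complex.betaIntegral_eq_Gamma_mul_div _ _ (by simpa) (by simpa),
    intervalIntegral.integral_of_le ht.le, integral_Ioc_eq_integral_Ioo] at hbeta
  apply Complex.ofReal_injective
  calc ((∫ s in Ioo 0 t, (t - s) ^ (a - 1) * s ^ (b - 1) : ℝ) : ℂ)
      = ∫ s in Ioo 0 t, (s : ℂ) ^ ((b : ℂ) - 1) * ((t : ℂ) - s) ^ ((a : ℂ) - 1) := by
        rw [← integral_complex_ofReal]
        refine setIntegral_congr_fun measurableSet_Ioo fun s hs => ?_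
        push_cast [Complex.ofReal_cpow (sub_nonneg.2 hs.2.le), Complex.ofReal_cpow hs.1.le]
        exact mul_comm _ _
    _ = (t : ℂ) ^ ((b : ℂ) + a - 1) *
          (Complex.Gamma b * Complex.Gamma a / Complex.Gamma (b + a)) := hbeta
    _ = ((t ^ (a + b - 1) * (Gamma a * Gamma b / Gamma (a + b)) : ℝ) : ℂ) := by
        push_cast [Complex.ofReal_cpow ht.le, ← Complex.Gamma_ofReal]
        rw [add_comm (b : ℂ), mul_comm (Complex.Gamma b)]

lemma volterraConv_rlKernel {a b t : ℝ} (ha : 0 < a) (hb : 0 < b) (ht : 0 < t) :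
    volterraConv (rlKernel a) (rlKernel b) t = rlKernel (a + b) t := by
  have hΓa := (Gamma_pos_of_pos ha).ne'
  have hΓb := (Gamma_pos_of_pos hb).ne'
  simp only [volterraConv, rlKernel, div_mul_div_comm, integral_div]
  rw [integral_rpow_sub_mul_rpow ha hb ht]
  field_simp

lemma volterraConvExistsAt_rlKernel {a b t : ℝ} (ha : 0 < a) (hb : 0 < b) (ht : 0 < t) :
    VolterraConvExistsAt (rlKernel a) (rlKernel b) t := by
  -- Otherwise the convolution would take the junk value `0`.
  by_contra h
  have hpos := rlKernel_pos (add_pos ha hb) ht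
  rw [← volterraConv_rlKernel ha hb ht, volterraConv, integral_undef h] at hpos
  exact hpos.false

end RiemannLiouville

section MittagLeffler

open Set Filter Topology

lemma sub_one_rpow_mul_Gamma_le {a x : ℝ} (ha : 0 < a) (hx : 1 < x) :
    (x - 1) ^ a * Gamma x ≤ Gamma (x + a) := by
  have hx₁ : 0 < x - 1 := sub_pos.2 hx
  have hΓ₁ := Gamma_pos_of_pos hx₁
  have hΓ := Gamma_pos_of_pos (zero_lt_one.trans hx)
  have hrec : Gamma x = (x - 1) * Gamma (x - 1) := by
    simpa only [sub_add_cancel] using Gamma_add_one hx₁.ne'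
  have hlog : log (Gamma x) - log (Gamma (x - 1)) = log (x - 1) := by
    rw [hrec, log_mul hx₁.ne' hΓ₁.ne', add_sub_cancel_right]
  have hslope := convexOn_log_Gamma.slope_mono_adjacent (x := x - 1) (y := x) (z := x + a)
    (mem_Ioi.2 hx₁) (mem_Ioi.2 (by linarith)) (by linarith) (by linarith)
  simp only [Function.comp, sub_sub_cancel, div_one, add_sub_cancel_left, hlog,
    le_div_iff₀ ha] at hslope
  rw [← log_le_log_iff (by positivity) (Gamma_pos_of_pos (by linarith)),
    log_mul (by positivity) hΓ.ne', log_rpow hx₁]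
  linarith

variable {α β : ℝ}

lemma tendsto_mul_natCast_add_atTop (hα : 0 < α) (β : ℝ) :
    Tendsto (fun j : ℕ => α * j + β) atTop atTop :=
  tendsto_atTop_add_const_right _ _ (tendsto_natCast_atTop_atTop.const_mul_atTop hα)

lemma summable_mittagLeffler (hα : 0 < α) (β z : ℝ) :
    Summable fun j : ℕ => z ^ j / Gamma (α * j + β) := by
  have harg := tendsto_mul_natCast_add_atTop hα β
  have hgrowth : Tendsto (fun j : ℕ => (α * j + β - 1) ^ α) atTop atTop :=
    (tendsto_rpow_atTop hα).comp (tendsto_atTop_add_const_right _ (-1) harg)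
  refine summable_of_ratio_norm_eventually_le (r := 1 / 2) (by norm_num) ?_
  filter_upwards [hgrowth.eventually_ge_atTop (2 * |z|), harg.eventually_gt_atTop 1]
    with j hj hj₁
  have hΓ := Gamma_pos_of_pos (zero_lt_one.trans hj₁)
  have hΓ' := Gamma_pos_of_pos (add_pos (zero_lt_one.trans hj₁) hα)
  have hratio : 2 * |z| * Gamma (α * j + β) ≤ Gamma (α * j + β + α) :=
    (mul_le_mul_of_nonneg_right hj hΓ.le).trans (sub_one_rpow_mul_Gamma_le hα hj₁)
  have hsucc : α * ((j + 1 : ℕ) : ℝ) + β = α * j + β + α := by push_cast; ring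
  rw [hsucc, norm_div, norm_div, norm_pow, norm_pow, norm_eq_abs, norm_of_nonneg hΓ.le,
    norm_of_nonneg hΓ'.le, div_le_iff₀ hΓ']
  calc |z| ^ (j + 1)
      = 1 / 2 * (|z| ^ j / Gamma (α * j + β)) * (2 * |z| * Gamma (α * j + β)) := by
        rw [pow_succ]; field_simp
    _ ≤ 1 / 2 * (|z| ^ j / Gamma (α * j + β)) * Gamma (α * j + β + α) := by gcongr

lemma hasSum_mittagLeffler (hα : 0 < α) (β z : ℝ) :
    HasSum (fun j : ℕ => z ^ j / Gamma (α * j + β)) (mittagLeffler α β z) :=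
  (summable_mittagLeffler hα β z).hasSum

lemma continuous_mittagLeffler (hα : 0 < α) (β : ℝ) : Continuous (mittagLeffler α β) := by
  refine continuous_iff_continuousAt.2 fun z => ?_
  have hball : ContinuousOn (mittagLeffler α β) (Metric.ball 0 (|z| + 1)) := by
    refine continuousOn_tsum (fun j => by fun_prop)
      (summable_mittagLeffler hα β (|z| + 1)).norm fun j x hx => ?_
    have hx' : ‖x‖ ≤ ‖|z| + 1‖ := (mem_ball_zero_iff.1 hx).le.trans (le_abs_self _)
    rw [norm_div, norm_div, norm_pow, norm_pow]
    gcongr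
  exact hball.continuousAt (Metric.isOpen_ball.mem_nhds (by simp))

lemma mittagLeffler_zero (α β : ℝ) : mittagLeffler α β 0 = 1 / Gamma β := by
  rw [mittagLeffler, tsum_eq_single 0 fun j hj => by rw [zero_pow hj, zero_div]]
  simp only [pow_zero, Nat.cast_zero, mul_zero, zero_add]

lemma mittagLeffler_eq_add_mul (hα : 0 < α) (β z : ℝ) :
    mittagLeffler α β z = 1 / Gamma β + z * mittagLeffler α (α + β) z := by
  rw [mittagLeffler, (summable_mittagLeffler hα β z).tsum_eq_zero_add, mittagLeffler,
    ← tsum_mul_left]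
  congr 1
  · simp only [pow_zero, Nat.cast_zero, mul_zero, zero_add]
  · refine tsum_congr fun j => ?_
    rw [pow_succ', mul_div_assoc, Nat.cast_succ, mul_add_one, add_assoc]

lemma mittagLeffler_nonneg_of_nonneg (hα : 0 ≤ α) (hβ : 0 < β) {z : ℝ} (hz : 0 ≤ z) :
    0 ≤ mittagLeffler α β z :=
  tsum_nonneg fun j =>
    div_nonneg (pow_nonneg hz j) (Gamma_pos_of_pos (by positivity)).le

end MittagLeffler

section MittagLefflerKernel

open Set

/-- The kernel `x^(β-1) E_{α,β}(z x^α)`. For `β = α` and `z = -λ` it is the kernel of the operator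
`(D_t^α + λ)⁻¹`; varying `β` makes the family stable under `volterraConv (rlKernel c)`. -/
noncomputable def mlKernel (α β z x : ℝ) : ℝ := x ^ (β - 1) * mittagLeffler α β (z * x ^ α)

variable {α β c t x : ℝ}

lemma measurable_mlKernel (hα : 0 < α) (β z : ℝ) : Measurable (mlKernel α β z) :=
  (measurable_id.pow_const _).mul
    ((continuous_mittagLeffler hα β).measurable.comp ((measurable_id.pow_const α).const_mul z))

lemma mlKernel_eq_rlKernel_mul (hβ : 0 < β) (α z x : ℝ) :
    mlKernel α β z x = rlKernel β x * (Gamma β * mittagLeffler α β (z * x ^ α)) := by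
  have hΓ := (Gamma_pos_of_pos hβ).ne'
  rw [mlKernel, rlKernel]
  field_simp

lemma continuous_mittagLeffler_mul_rpow (hα : 0 < α) (β z : ℝ) :
    Continuous fun x : ℝ => mittagLeffler α β (z * x ^ α) :=
  (continuous_mittagLeffler hα β).comp (continuous_const.mul (continuous_rpow_const hα.le))

lemma hasSum_mlKernel (hα : 0 < α) (β z : ℝ) (hx : 0 < x) :
    HasSum (fun j : ℕ => z ^ j * rlKernel (α * j + β) x) (mlKernel α β z x) := by
  have hterm (j : ℕ) : z ^ j * rlKernel (α * j + β) x =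
      x ^ (β - 1) * ((z * x ^ α) ^ j / Gamma (α * j + β)) := by
    rw [rlKernel, add_sub_assoc, rpow_add hx, rpow_mul hx.le, rpow_natCast, mul_pow]
    ring
  simp only [hterm]
  exact (hasSum_mittagLeffler hα β (z * x ^ α)).mul_left (x ^ (β - 1))

lemma mlKernel_eq_add_mul (hα : 0 < α) (β z : ℝ) (hx : 0 < x) :
    mlKernel α β z x = rlKernel β x + z * mlKernel α (α + β) z x := by
  rw [mlKernel, mlKernel, rlKernel, mittagLeffler_eq_add_mul hα, add_sub_assoc, rpow_add hx]
  ring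

lemma volterraConvExistsAt_rlKernel_mlKernel (hα : 0 < α) (hc : 0 < c) (hβ : 0 < β) (z : ℝ)
    (ht : 0 < t) : VolterraConvExistsAt (rlKernel c) (mlKernel α β z) t := by
  have hrl : IntegrableOn (fun s => rlKernel c (t - s) * rlKernel β s) (Icc 0 t) := by
    rw [integrableOn_Icc_iff_integrableOn_Ioo]
    exact volterraConvExistsAt_rlKernel hc hβ ht
  have hfactor : ContinuousOn (fun s => Gamma β * mittagLeffler α β (z * s ^ α)) (Icc 0 t) :=
    ((continuous_mittagLeffler_mul_rpow hα β z).const_mul _).continuousOn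
  have hprod := (hrl.mul_continuousOn hfactor isCompact_Icc).mono_set Ioo_subset_Icc_self
  simpa only [VolterraConvExistsAt, mlKernel_eq_rlKernel_mul hβ, mul_assoc] using hprod

lemma volterraConv_rlKernel_mlKernel (hα : 0 < α) (hc : 0 < c) (hβ : 0 < β) (z : ℝ)
    (ht : 0 < t) : volterraConv (rlKernel c) (mlKernel α β z) t = mlKernel α (c + β) z t := by
  have hβj : ∀ j : ℕ, 0 < α * j + β := fun j => by positivity
  have hconv (w : ℝ) (j : ℕ) :
      ∫ s in Ioo 0 t, w ^ j * (rlKernel c (t - s) * rlKernel (α * j + β) s) =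
        w ^ j * rlKernel (α * j + (c + β)) t := by
    rw [integral_const_mul, ← volterraConv, volterraConv_rlKernel hc (hβj j) ht, add_left_comm]
  have hnorm (j : ℕ) :
      ∫ s in Ioo 0 t, ‖z ^ j * (rlKernel c (t - s) * rlKernel (α * j + β) s)‖ =
        |z| ^ j * rlKernel (α * j + (c + β)) t := by
    rw [← hconv]
    refine setIntegral_congr_fun measurableSet_Ioo fun s hs => ?_
    have hc' := rlKernel_pos hc (sub_pos.2 hs.2)
    have hβ' := rlKernel_pos (hβj j) hs.1
    simp only [norm_mul, norm_pow, norm_eq_abs, abs_of_pos hc', abs_of_pos hβ']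
  have hsum := hasSum_integral_of_summable_integral_norm
    (fun j => (volterraConvExistsAt_rlKernel hc (hβj j) ht).const_mul (z ^ j))
    (by simpa only [hnorm] using (hasSum_mlKernel hα (c + β) |z| ht).summable)
  simp only [hconv] at hsum
  rw [(hasSum_mlKernel hα (c + β) z ht).unique hsum]
  refine setIntegral_congr_fun measurableSet_Ioo fun s hs => ?_
  have hs' := ((hasSum_mlKernel hα β z hs.1).mul_left (rlKernel c (t - s))).tsum_eq
  simpa only [mul_left_comm] using hs'.symm

lemma mlKernel_eq_add_volterraConv (hα : 0 < α) (hβ : 0 < β) (z : ℝ) (ht : 0 < t) :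
    mlKernel α β z t = rlKernel β t + z * volterraConv (rlKernel α) (mlKernel α β z) t := by
  rw [volterraConv_rlKernel_mlKernel hα hα hβ z ht, mlKernel_eq_add_mul hα β z ht]

end MittagLefflerKernel

section Positivity

open Set

lemma exists_mem_Ioo_integral_lt {f : ℝ → ℝ} {a b ε : ℝ} (hab : a < b) (hε : 0 < ε)
    (hf : IntervalIntegrable f volume a b) : ∃ c ∈ Ioo a b, ∫ x in c..b, f x < ε := by
  have hcont : ContinuousWithinAt (fun c => ∫ x in c..b, f x) (Ioo a b) b :=
    (intervalIntegral.continuousOn_primitive_interval_left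
      ((intervalIntegrable_iff' (μ := volume)).1 hf) b right_mem_uIcc).mono
      (Ioo_subset_Icc_self.trans Icc_subset_uIcc)
  have hlt : (fun c => ∫ x in c..b, f x) b < ε := by
    simpa only [intervalIntegral.integral_same] using hε
  have := right_nhdsWithin_Ioo_neBot hab
  exact ((eventually_mem_nhdsWithin).and (hcont.eventually_lt_const hlt)).exists

variable {a : ℝ} {h : ℝ → ℝ} {κ : ℝ → ℝ → ℝ}

lemma mul_one_sub_integral_le_of_antitone_kernel {t t₀ : ℝ} (ht : 0 < t) (htt₀ : t ≤ t₀)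
    (hcont : ContinuousOn h (Ici 0))
    (hκ_int : ∀ y, 0 < y → IntervalIntegrable (κ y) volume 0 y)
    (hκ_nonneg : ∀ y, ∀ s ∈ Ioo 0 y, 0 ≤ κ y s)
    (hκ_anti : ∀ s, 0 < s → AntitoneOn (fun y => κ y s) (Ioi s))
    (heq : ∀ y, 0 < y → h y = a - ∫ s in 0..y, κ y s * h s)
    (hnonneg : ∀ s ∈ Ioo 0 t, 0 ≤ h s) (hle : ∀ s ∈ Ioo t t₀, h s ≤ h t) :
    h t * (1 - ∫ s in t..t₀, κ t₀ s) ≤ h t₀ := by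
  have ht₀ := ht.trans_le htt₀
  have hint (y b c : ℝ) (hy : 0 < y) (hb : 0 ≤ b) (hbc : b ≤ c) (hcy : c ≤ y) :
      IntervalIntegrable (κ y) volume b c ∧
        IntervalIntegrable (fun s => κ y s * h s) volume b c := by
    have hsub : uIcc b c ⊆ uIcc 0 y := by
      rw [uIcc_of_le hbc, uIcc_of_le hy.le]
      exact Icc_subset_Icc hb hcy
    have hκ := (hκ_int y hy).mono_set hsub
    exact ⟨hκ, hκ.mul_continuousOn (hcont.mono fun s hs => (uIcc_of_le hy.le ▸ hsub hs).1)⟩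
  have hmemory : ∫ s in 0..t, κ t₀ s * h s ≤ ∫ s in 0..t, κ t s * h s :=
    intervalIntegral.integral_mono_on_of_le_Ioo ht.le (hint t₀ 0 t ht₀ le_rfl ht.le htt₀).2
      (hint t 0 t ht le_rfl ht.le le_rfl).2 fun s hs => mul_le_mul_of_nonneg_right
        (hκ_anti s hs.1 (mem_Ioi.2 hs.2) (mem_Ioi.2 (hs.2.trans_le htt₀)) htt₀) (hnonneg s hs)
  have hrecent : ∫ s in t..t₀, κ t₀ s * h s ≤ (∫ s in t..t₀, κ t₀ s) * h t := by
    rw [← intervalIntegral.integral_mul_const]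
    have ⟨hκ, hκh⟩ := hint t₀ t t₀ ht₀ ht.le htt₀ le_rfl
    exact intervalIntegral.integral_mono_on_of_le_Ioo htt₀ hκh (hκ.mul_const _) fun s hs =>
      mul_le_mul_of_nonneg_left (hle s hs) (hκ_nonneg t₀ s ⟨ht.trans hs.1, hs.2⟩)
  have hsplit := intervalIntegral.integral_add_adjacent_intervals
    (hint t₀ 0 t ht₀ le_rfl ht.le htt₀).2 (hint t₀ t t₀ ht₀ ht.le htt₀ le_rfl).2
  rw [heq t₀ ht₀, ← hsplit]
  linarith [heq t ht]

/-- At a first zero `t₀` the memory of `[0, t]` has only faded since `t < t₀`, so `h t₀` retains a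
positive fraction of the maximum of `h` over a short interval ending at `t₀`. -/
theorem pos_of_antitone_kernel (hcont : ContinuousOn h (Ici 0)) (h0 : 0 < h 0)
    (hκ_int : ∀ y, 0 < y → IntervalIntegrable (κ y) volume 0 y)
    (hκ_nonneg : ∀ y, ∀ s ∈ Ioo 0 y, 0 ≤ κ y s)
    (hκ_anti : ∀ s, 0 < s → AntitoneOn (fun y => κ y s) (Ioi s))
    (heq : ∀ y, 0 < y → h y = a - ∫ s in 0..y, κ y s * h s) {x : ℝ} (hx : 0 ≤ x) :
    0 < h x := by
  by_contra! hneg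
  let S := Ici 0 ∩ h ⁻¹' Iic 0
  have hS : IsClosed S := hcont.preimage_isClosed_of_isClosed isClosed_Ici isClosed_Iic
  have hS_bdd : BddBelow S := ⟨0, fun y hy => hy.1⟩
  obtain ⟨ht₀, hzero⟩ : sInf S ∈ S := hS.csInf_mem ⟨x, hx, hneg⟩ hS_bdd
  set t₀ := sInf S
  have hpos : ∀ y ∈ Ico 0 t₀, 0 < h y := fun y hy => by
    by_contra! hy'
    exact hy.2.not_ge (csInf_le hS_bdd ⟨hy.1, hy'⟩)
  have ht₀_pos : 0 < t₀ := (mem_Ici.1 ht₀).lt_of_ne fun h' => (h' ▸ hzero : h 0 ≤ 0).not_gt h0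
  obtain ⟨t₁, ht₁, hsmall⟩ := exists_mem_Ioo_integral_lt ht₀_pos one_pos (hκ_int t₀ ht₀_pos)
  obtain ⟨t, ht, hmax⟩ := isCompact_Icc.exists_isMaxOn (nonempty_Icc.2 ht₁.2.le)
    (hcont.mono fun s hs => ht₁.1.le.trans hs.1 : ContinuousOn h (Icc t₁ t₀))
  have ht_pos : 0 < h t :=
    (hpos t₁ ⟨ht₁.1.le, ht₁.2⟩).trans_le (hmax (left_mem_Icc.2 ht₁.2.le))
  have ht0 : 0 < t := ht₁.1.trans_le ht.1
  have hshort : ∫ s in t..t₀, κ t₀ s ≤ ∫ s in t₁..t₀, κ t₀ s :=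
    intervalIntegral.integral_mono_interval ht.1 ht.2 le_rfl
      (by
        rw [← restrict_Ioo_eq_restrict_Ioc]
        exact ae_restrict_of_forall_mem measurableSet_Ioo fun s hs =>
          hκ_nonneg t₀ s ⟨ht₁.1.trans hs.1, hs.2⟩)
      ((hκ_int t₀ ht₀_pos).mono_set (by
        rw [uIcc_of_le ht₁.2.le, uIcc_of_le ht₀_pos.le]; exact Icc_subset_Icc_left ht₁.1.le))
  have hlower := mul_one_sub_integral_le_of_antitone_kernel ht0 ht.2 hcont hκ_int hκ_nonneg
    hκ_anti heq (fun s hs => (hpos s ⟨hs.1.le, hs.2.trans_le ht.2⟩).le)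
    fun s hs => hmax ⟨ht.1.trans hs.1.le, hs.2.le⟩
  have := mul_pos ht_pos (sub_pos.2 (hshort.trans_lt hsmall))
  exact (this.trans_le hlower).not_ge hzero

end Positivity

section MittagLefflerPositivity

open Set

variable {α β : ℝ}

lemma antitoneOn_rlKernel_sub_div_rlKernel (hα : 0 < α) (hα₁ : α ≤ 1) (hαβ : α ≤ β) {s : ℝ}
    (hs : 0 < s) : AntitoneOn (fun y => rlKernel α (y - s) / rlKernel β y) (Ioi s) := by
  have hβ := hα.trans_le hαβ
  have hpos : ∀ y ∈ Ioi s, 0 < 1 - s / y := fun y hy =>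
    sub_pos.2 ((div_lt_one (hs.trans hy)).2 hy)
  have hrw : ∀ y ∈ Ioi s, rlKernel α (y - s) / rlKernel β y =
      Gamma β / Gamma α * ((1 - s / y) ^ (α - 1) * y ^ (α - β)) := fun y hy => by
    have hy₀ : 0 < y := hs.trans hy
    have hΓα := (Gamma_pos_of_pos hα).ne'
    have hΓβ := (Gamma_pos_of_pos hβ).ne'
    have hsub : y - s = y * (1 - s / y) := by field_simp
    have hexp : y ^ (α - β) = y ^ (α - 1) / y ^ (β - 1) := by
      rw [← rpow_sub hy₀, sub_sub_sub_cancel_right]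
    rw [rlKernel, rlKernel, hsub, mul_rpow hy₀.le (hpos y hy).le, hexp]
    field_simp
  intro y hy y' hy' hyy'
  have hy₀ : 0 < y := hs.trans hy
  have hbase : 1 - s / y ≤ 1 - s / y' := by gcongr
  simp only [hrw y hy, hrw y' hy']
  exact mul_le_mul_of_nonneg_left
    (mul_le_mul (rpow_le_rpow_of_nonpos (hpos y hy) hbase (sub_nonpos.2 hα₁))
      (rpow_le_rpow_of_nonpos hy₀ hyy' (sub_nonpos.2 hαβ)) (rpow_nonneg (hy₀.le.trans hyy') _)
      (rpow_nonneg (hpos y hy).le _))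
    (div_nonneg (Gamma_pos_of_pos hβ).le (Gamma_pos_of_pos hα).le)

/-- The Volterra equation of `mlKernel α β z` divided by `rlKernel β`, which removes the singularity
at `0`. -/
lemma Gamma_mul_mittagLeffler_eq_one_sub_integral (hα : 0 < α) (hβ : 0 < β) (z : ℝ) {y : ℝ}
    (hy : 0 < y) :
    Gamma β * mittagLeffler α β (z * y ^ α) =
      1 - ∫ s in 0..y, -z * (rlKernel α (y - s) / rlKernel β y * rlKernel β s) *
        (Gamma β * mittagLeffler α β (z * s ^ α)) := by
  have hrl := (rlKernel_pos hβ hy).ne'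
  have hvolterra := mlKernel_eq_add_volterraConv hα hβ z hy
  rw [mlKernel_eq_rlKernel_mul hβ] at hvolterra
  have hintegral : ∫ s in 0..y, -z * (rlKernel α (y - s) / rlKernel β y * rlKernel β s) *
        (Gamma β * mittagLeffler α β (z * s ^ α)) =
      -z / rlKernel β y * volterraConv (rlKernel α) (mlKernel α β z) y := by
    rw [intervalIntegral.integral_of_le hy.le, integral_Ioc_eq_integral_Ioo, volterraConv,
      ← integral_const_mul]
    congr with s
    rw [mlKernel_eq_rlKernel_mul hβ]
    ring
  rw [hintegral, eq_sub_iff_add_eq]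
  field_simp
  linarith

lemma mittagLeffler_pos_of_nonpos (hα : 0 < α) (hα₁ : α ≤ 1) (hαβ : α ≤ β) {z : ℝ}
    (hz : z ≤ 0) : 0 < mittagLeffler α β z := by
  have hβ := hα.trans_le hαβ
  have hΓ := Gamma_pos_of_pos hβ
  let h : ℝ → ℝ := fun x => Gamma β * mittagLeffler α β (z * x ^ α)
  let κ : ℝ → ℝ → ℝ := fun y s => -z * (rlKernel α (y - s) / rlKernel β y * rlKernel β s)
  have h0 : 0 < h 0 := by
    simp only [h, zero_rpow hα.ne', mul_zero, mittagLeffler_zero, mul_one_div_cancel hΓ.ne',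
      one_pos]
  have hκ_int (y : ℝ) (hy : 0 < y) : IntervalIntegrable (κ y) volume 0 y := by
    rw [intervalIntegrable_iff_integrableOn_Ioo_of_le hy.le]
    refine ((volterraConvExistsAt_rlKernel hα hβ hy).const_mul (-z / rlKernel β y)).congr
      (.of_forall fun s => ?_)
    simp only [κ]
    ring
  have hκ_nonneg (y s : ℝ) (hs : s ∈ Ioo 0 y) : 0 ≤ κ y s :=
    mul_nonneg (neg_nonneg.2 hz) (mul_nonneg (div_nonneg (rlKernel_pos hα (sub_pos.2 hs.2)).le
      (rlKernel_pos hβ (hs.1.trans hs.2)).le) (rlKernel_pos hβ hs.1).le)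
  have hκ_anti (s : ℝ) (hs : 0 < s) : AntitoneOn (fun y => κ y s) (Ioi s) :=
    fun y hy y' hy' hyy' => mul_le_mul_of_nonneg_left (mul_le_mul_of_nonneg_right
      (antitoneOn_rlKernel_sub_div_rlKernel hα hα₁ hαβ hs hy hy' hyy') (rlKernel_pos hβ hs).le)
      (neg_nonneg.2 hz)
  have hpos : 0 < h 1 := pos_of_antitone_kernel
    ((continuous_mittagLeffler_mul_rpow hα β z).const_mul (Gamma β)).continuousOn h0 hκ_int
    hκ_nonneg hκ_anti (fun y hy => Gamma_mul_mittagLeffler_eq_one_sub_integral hα hβ z hy)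
    zero_le_one
  simpa only [h, one_rpow, mul_one, mul_pos_iff_of_pos_left hΓ] using hpos

theorem mittagLeffler_pos (hα : 0 < α) (hα₁ : α ≤ 1) (hαβ : α ≤ β) (z : ℝ) :
    0 < mittagLeffler α β z := by
  rcases le_total z 0 with hz | hz
  · exact mittagLeffler_pos_of_nonpos hα hα₁ hαβ hz
  · have hβ := hα.trans_le hαβ
    rw [mittagLeffler_eq_add_mul hα]
    exact add_pos_of_pos_of_nonneg (one_div_pos.2 (Gamma_pos_of_pos hβ))
      (mul_nonneg hz (mittagLeffler_nonneg_of_nonneg hα.le (add_pos hα hβ) hz))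

lemma mlKernel_pos (hα : 0 < α) (hα₁ : α ≤ 1) (hαβ : α ≤ β) (z : ℝ) {x : ℝ} (hx : 0 < x) :
    0 < mlKernel α β z x :=
  mul_pos (rpow_pos_of_pos hx _) (mittagLeffler_pos hα hα₁ hαβ _)

end MittagLefflerPositivity

section Resolvent

open Set

/-- The kernel of `D_t^α + c` acting on derivatives: if `v` vanishes at `0`, then
`D_t^α v + c v = volterraConv (caputoKernel α c) v'`. -/
noncomputable def caputoKernel (α c x : ℝ) : ℝ := rlKernel (1 - α) x + c

variable {α t : ℝ} {v : ℝ → ℝ}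

lemma measurable_caputoKernel (α c : ℝ) : Measurable (caputoKernel α c) :=
  (measurable_rlKernel _).add_const c

lemma continuous_mlKernel {β : ℝ} (hα : 0 < α) (hβ : 1 ≤ β) (z : ℝ) :
    Continuous (mlKernel α β z) :=
  (continuous_rpow_const (sub_nonneg.2 hβ)).mul (continuous_mittagLeffler_mul_rpow hα β z)

lemma volterraConvExistsAt_const_mlKernel (hα : 0 < α) (c z : ℝ) (ht : 0 < t) :
    VolterraConvExistsAt (fun _ => c) (mlKernel α α z) t := by
  have h := Integrable.const_mul (volterraConvExistsAt_rlKernel_mlKernel hα one_pos hα z ht) c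
  simp only [rlKernel_one, one_mul] at h
  exact h

lemma volterraConvExistsAt_caputoKernel_mlKernel (hα : 0 < α) (hα₁ : α < 1) (c z : ℝ)
    (ht : 0 < t) : VolterraConvExistsAt (caputoKernel α c) (mlKernel α α z) t := by
  simp only [VolterraConvExistsAt, caputoKernel, add_mul]
  exact Integrable.add (volterraConvExistsAt_rlKernel_mlKernel hα (sub_pos.2 hα₁) hα z ht)
    (volterraConvExistsAt_const_mlKernel hα c z ht)

lemma volterraConv_caputoKernel_mlKernel (hα : 0 < α) (hα₁ : α < 1) (c z : ℝ) (ht : 0 < t) :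
    volterraConv (caputoKernel α c) (mlKernel α α z) t =
      mlKernel α 1 z t + c * mlKernel α (α + 1) z t := by
  have hconst : volterraConv (fun _ => c) (mlKernel α α z) t = c * mlKernel α (α + 1) z t := by
    rw [add_comm α, ← volterraConv_rlKernel_mlKernel hα one_pos hα z ht]
    simp only [volterraConv, rlKernel_one, one_mul, integral_const_mul]
  have hadd := volterraConv_add_left
    (volterraConvExistsAt_rlKernel_mlKernel hα (sub_pos.2 hα₁) hα z ht)
    (volterraConvExistsAt_const_mlKernel hα c z ht)
  rwa [volterraConv_rlKernel_mlKernel hα (sub_pos.2 hα₁) hα z ht, sub_add_cancel, hconst] at hadd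

lemma volterraConv_mlKernel_caputoKernel (hα : 0 < α) (hα₁ : α < 1) (c : ℝ) (ht : 0 < t) :
    volterraConv (mlKernel α α (-c)) (caputoKernel α c) t = 1 := by
  rw [volterraConv_comm, volterraConv_caputoKernel_mlKernel hα hα₁ c _ ht,
    mlKernel_eq_add_mul hα 1 (-c) ht, rlKernel_one]
  ring

lemma exists_volterraConv_norm_mlKernel_caputoKernel_le (hα : 0 < α) (hα₁ : α < 1)
    (c z t : ℝ) : ∃ M, ∀ x ∈ Ioo 0 t,
      volterraConv (fun y => ‖mlKernel α α z y‖) (fun y => ‖caputoKernel α c y‖) x ≤ M := by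
  have hcont : ContinuousOn (fun x => mlKernel α 1 z x + |c| * mlKernel α (α + 1) z x)
      (Icc 0 t) := ((continuous_mlKernel hα le_rfl z).add
    ((continuous_mlKernel hα (by linarith) z).const_mul |c|)).continuousOn
  obtain ⟨M, hM⟩ := isCompact_Icc.bddAbove_image hcont
  refine ⟨M, fun x hx => (?_ : _ ≤ _).trans (hM (mem_image_of_mem _ (Ioo_subset_Icc_self hx)))⟩
  have hk : ∀ y ∈ Ioo 0 x, 0 < mlKernel α α z y := fun y hy => mlKernel_pos hα hα₁.le le_rfl z hy.1
  have hexists (d : ℝ) : VolterraConvExistsAt (mlKernel α α z) (caputoKernel α d) x :=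
    (volterraConvExistsAt_caputoKernel_mlKernel hα hα₁ d z hx.1).symm
  calc volterraConv (fun y => ‖mlKernel α α z y‖) (fun y => ‖caputoKernel α c y‖) x
      = ∫ s in Ioo 0 x, ‖mlKernel α α z (x - s) * caputoKernel α c s‖ := by
        simp only [volterraConv, norm_mul]
    _ ≤ volterraConv (mlKernel α α z) (caputoKernel α |c|) x := by
        refine setIntegral_mono_on (hexists c).norm (hexists |c|) measurableSet_Ioo fun s hs => ?_
        have hks := hk (x - s) ⟨sub_pos.2 hs.2, sub_lt_self x hs.1⟩
        have hrl := rlKernel_pos (sub_pos.2 hα₁) hs.1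
        rw [norm_mul, norm_of_nonneg hks.le]
        refine mul_le_mul_of_nonneg_left ((norm_add_le _ _).trans_eq ?_) hks.le
        rw [norm_of_nonneg hrl.le, caputoKernel, norm_eq_abs]
    _ = mlKernel α 1 z x + |c| * mlKernel α (α + 1) z x := by
        rw [volterraConv_comm, volterraConv_caputoKernel_mlKernel hα hα₁ _ z hx.1]

lemma volterraConvExistsAt_mlKernel_volterraConv_caputoKernel (hα : 0 < α) (hα₁ : α < 1)
    (c z : ℝ) (hv : IntegrableOn v (Ioo 0 t)) :
    VolterraConvExistsAt (mlKernel α α z) (volterraConv (caputoKernel α c) v) t := by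
  obtain ⟨M, hM⟩ := exists_volterraConv_norm_mlKernel_caputoKernel_le hα hα₁ c z t
  exact volterraConvExistsAt_volterraConv (measurable_mlKernel hα α z)
    (measurable_caputoKernel α c) hv
    (fun x hx => (volterraConvExistsAt_caputoKernel_mlKernel hα hα₁ c z hx.1).symm) hM

theorem volterraConv_mlKernel_volterraConv_caputoKernel (hα : 0 < α) (hα₁ : α < 1) (c : ℝ)
    (hv : IntegrableOn v (Ioo 0 t)) :
    volterraConv (mlKernel α α (-c)) (volterraConv (caputoKernel α c) v) t =
      ∫ s in Ioo 0 t, v s := by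
  obtain ⟨M, hM⟩ := exists_volterraConv_norm_mlKernel_caputoKernel_le hα hα₁ c (-c) t
  rw [← volterraConv_assoc (measurable_mlKernel hα α (-c)) (measurable_caputoKernel α c) hv
    (fun x hx => (volterraConvExistsAt_caputoKernel_mlKernel hα hα₁ c (-c) hx.1).symm) hM,
    volterraConv]
  refine setIntegral_congr_fun measurableSet_Ioo fun s hs => ?_
  simp only [volterraConv_mlKernel_caputoKernel hα hα₁ c (sub_pos.2 hs.2), one_mul]

end Resolvent

section LayerCake

open Set

variable {a b : ℝ} {g ψ : ℝ → ℝ}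

lemma exists_ae_eq_Ioo_of_forall_le_mem {S : Set ℝ} (hSab : S ⊆ Ioo a b) (hS : S.Nonempty)
    (hup : ∀ x ∈ S, ∀ y ∈ Ioo a b, x ≤ y → y ∈ S) : ∃ τ ∈ Ico a b, S =ᵐ[volume] Ioo τ b := by
  have hbdd : BddBelow S := ⟨a, fun x hx => (hSab hx).1.le⟩
  have ha : a ≤ sInf S := le_csInf hS fun x hx => (hSab hx).1.le
  have hIoo : Ioo (sInf S) b ⊆ S := by
    intro y hy
    obtain ⟨x, hx, hxy⟩ := exists_lt_of_csInf_lt hS hy.1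
    exact hup x hx y ⟨ha.trans_lt hy.1, hy.2⟩ hxy.le
  have hIco : S ⊆ Ico (sInf S) b := fun x hx => ⟨csInf_le hbdd hx, (hSab hx).2⟩
  obtain ⟨x, hx⟩ := hS
  exact ⟨sInf S, ⟨ha, (csInf_le hbdd hx).trans_lt (hSab hx).2⟩,
    (hIco.eventuallyLE.trans Ioo_ae_eq_Ico.symm.le).antisymm hIoo.eventuallyLE⟩

lemma integral_Ioi_indicator_lt {y : ℝ} (hy : 0 ≤ y) (c : ℝ) :
    ∫ u in Ioi 0, (Iio y).indicator (fun _ => c) u = y * c := by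
  rw [setIntegral_indicator measurableSet_Iio, Ioi_inter_Iio, setIntegral_const,
    volume_real_Ioo_of_le hy, sub_zero, smul_eq_mul]

lemma integrable_indicator_lt (hg : MonotoneOn g (Ioo a b)) (hg₀ : ∀ s ∈ Ioo a b, 0 ≤ g s)
    (hψ : AEStronglyMeasurable ψ (volume.restrict (Ioo a b)))
    (hgψ : IntegrableOn (fun s => g s * ψ s) (Ioo a b)) :
    Integrable (fun p : ℝ × ℝ => (Iio (g p.1)).indicator (fun _ => ψ p.1) p.2)
      ((volume.restrict (Ioo a b)).prod (volume.restrict (Ioi 0))) := by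
  have hmeas : AEStronglyMeasurable
      (fun p : ℝ × ℝ => (Iio (g p.1)).indicator (fun _ => ψ p.1) p.2)
      ((volume.restrict (Ioo a b)).prod (volume.restrict (Ioi 0))) := by
    have hgm := aemeasurable_restrict_of_monotoneOn (μ := volume) measurableSet_Ioo hg
    exact hψ.comp_fst.indicator₀
      (nullMeasurableSet_lt (measurable_snd.aemeasurable) hgm.comp_fst)
  refine (integrable_prod_iff hmeas).2 ⟨?_, ?_⟩
  · refine .of_forall fun s => ?_
    dsimp only
    rw [integrable_indicator_iff measurableSet_Iio, IntegrableOn,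
      Measure.restrict_restrict measurableSet_Iio, Iio_inter_Ioi]
    exact integrableOn_const measure_Ioo_lt_top.ne
  · refine hgψ.norm.congr (ae_restrict_of_forall_mem measurableSet_Ioo fun s hs => ?_)
    simp only [norm_indicator_eq_indicator_norm, integral_Ioi_indicator_lt (hg₀ s hs), norm_mul,
      norm_of_nonneg (hg₀ s hs)]

theorem integral_mul_nonneg_of_monotoneOn (hg : MonotoneOn g (Ioo a b))
    (hg₀ : ∀ s ∈ Ioo a b, 0 ≤ g s) (hψ : AEStronglyMeasurable ψ (volume.restrict (Ioo a b)))
    (hgψ : IntegrableOn (fun s => g s * ψ s) (Ioo a b))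
    (htail : ∀ τ ∈ Ico a b, 0 ≤ ∫ s in Ioo τ b, ψ s) :
    0 ≤ ∫ s in Ioo a b, g s * ψ s := by
  have hgm := aemeasurable_restrict_of_monotoneOn (μ := volume) measurableSet_Ioo hg
  calc 0 ≤ ∫ u in Ioi 0, ∫ s in Ioo a b, (Iio (g s)).indicator (fun _ => ψ s) u := ?_
    _ = ∫ s in Ioo a b, ∫ u in Ioi 0, (Iio (g s)).indicator (fun _ => ψ s) u :=
        (integral_integral_swap (integrable_indicator_lt hg hg₀ hψ hgψ)).symm
    _ = ∫ s in Ioo a b, g s * ψ s :=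
        setIntegral_congr_fun measurableSet_Ioo fun s hs => integral_Ioi_indicator_lt (hg₀ s hs) _
  refine integral_nonneg fun u => ?_
  have hlevel : NullMeasurableSet {s | u < g s} (volume.restrict (Ioo a b)) :=
    nullMeasurableSet_lt aemeasurable_const hgm
  have hset : ∫ s in Ioo a b, (Iio (g s)).indicator (fun _ => ψ s) u =
      ∫ s in {s | u < g s} ∩ Ioo a b, ψ s := by
    rw [← Measure.restrict_restrict₀ hlevel]
    exact integral_indicator₀ hlevel
  rw [Pi.zero_apply, hset]
  rcases ({s | u < g s} ∩ Ioo a b).eq_empty_or_nonempty with hempty | hne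
  · rw [hempty, setIntegral_empty]
  · obtain ⟨τ, hτ, hae⟩ := exists_ae_eq_Ioo_of_forall_le_mem inter_subset_right hne
      fun x hx y hy hxy => ⟨lt_of_lt_of_le hx.1 (hg hx.2 hy hxy), hy⟩
    rw [setIntegral_congr_set hae]
    exact htail τ hτ

end LayerCake

section NormDerivative

open Set

variable {E : Type*} [NormedAddCommGroup E] [NormedSpace ℝ E] {e e' : ℝ → E} {a b : ℝ}

lemma abs_deriv_norm_le {e₀' : E} {s : ℝ} (h : HasDerivAt e e₀' s) :
    |deriv (fun x => ‖e x‖) s| ≤ ‖e₀'‖ := by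
  by_cases hd : DifferentiableAt ℝ (fun x => ‖e x‖) s
  · refine le_of_tendsto_of_tendsto (hasDerivAt_iff_tendsto_slope.1 hd.hasDerivAt).norm
      (hasDerivAt_iff_tendsto_slope.1 h).norm (.of_forall fun x => ?_)
    simp only [slope_def_module, norm_smul]
    exact mul_le_mul_of_nonneg_left (abs_norm_sub_norm_le _ _) (norm_nonneg _)
  · rw [deriv_zero_of_not_differentiableAt hd, abs_zero]
    exact norm_nonneg _

lemma absolutelyContinuousOnInterval_of_dist_le {X Y : Type*} [PseudoMetricSpace X]
    [PseudoMetricSpace Y] {f : ℝ → X} {g : ℝ → Y} (hg : AbsolutelyContinuousOnInterval g a b)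
    (hfg : ∀ x ∈ uIcc a b, ∀ y ∈ uIcc a b, dist (f x) (f y) ≤ dist (g x) (g y)) :
    AbsolutelyContinuousOnInterval f a b := by
  refine (absolutelyContinuousOnInterval_iff f a b).2 fun ε hε => ?_
  obtain ⟨δ, hδ, h⟩ := (absolutelyContinuousOnInterval_iff g a b).1 hg ε hε
  refine ⟨δ, hδ, fun I hI hIδ => (Finset.sum_le_sum fun i hi => ?_).trans_lt (h I hI hIδ)⟩
  exact hfg _ (hI.1 i hi).1 _ (hI.1 i hi).2

lemma integrableOn_mul_deriv_norm {g : ℝ → ℝ}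
    (hg : AEStronglyMeasurable g (volume.restrict (Ioo a b))) (hg₀ : ∀ s ∈ Ioo a b, 0 ≤ g s)
    (hderiv : ∀ s ∈ Ioo a b, HasDerivAt e (e' s) s)
    (hge' : IntegrableOn (fun s => g s * ‖e' s‖) (Ioo a b)) :
    IntegrableOn (fun s => g s * deriv (fun x => ‖e x‖) s) (Ioo a b) := by
  refine Integrable.mono' hge' (hg.mul (measurable_deriv _).aestronglyMeasurable)
    (ae_restrict_of_forall_mem measurableSet_Ioo fun s hs => ?_)
  rw [norm_mul, norm_of_nonneg (hg₀ s hs)]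
  exact mul_le_mul_of_nonneg_left (abs_deriv_norm_le (hderiv s hs)) (hg₀ s hs)

variable [CompleteSpace E]

lemma aestronglyMeasurable_of_hasDerivAt (hderiv : ∀ s ∈ Ioo a b, HasDerivAt e (e' s) s) :
    AEStronglyMeasurable e' (volume.restrict (Ioo a b)) :=
  (stronglyMeasurable_deriv e).aestronglyMeasurable.congr
    (ae_restrict_of_forall_mem measurableSet_Ioo fun s hs => (hderiv s hs).deriv)

lemma setIntegral_Ioo_eq_sub_of_hasDerivAt (hab : a ≤ b) (he : ContinuousOn e (Icc a b))
    (hderiv : ∀ s ∈ Ioo a b, HasDerivAt e (e' s) s) (he' : IntegrableOn e' (Ioo a b)) :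
    ∫ s in Ioo a b, e' s = e b - e a := by
  rw [← integral_Ioc_eq_integral_Ioo, ← intervalIntegral.integral_of_le hab]
  exact intervalIntegral.integral_eq_sub_of_hasDerivAt_of_le hab he hderiv
    ((intervalIntegrable_iff_integrableOn_Ioo_of_le hab).2 he')

lemma dist_le_dist_integral_norm_of_hasDerivAt (he : ContinuousOn e (Icc a b))
    (hderiv : ∀ s ∈ Ioo a b, HasDerivAt e (e' s) s) (he' : IntegrableOn e' (Ioo a b))
    {x y : ℝ} (hx : x ∈ Icc a b) (hy : y ∈ Icc a b) :
    dist (e x) (e y) ≤ dist (∫ s in a..x, ‖e' s‖) (∫ s in a..y, ‖e' s‖) := by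
  wlog hxy : x ≤ y generalizing x y
  · rw [dist_comm, dist_comm (∫ s in a..x, ‖e' s‖)]
    exact this hy hx (le_of_not_ge hxy)
  have hsub : Ioo x y ⊆ Ioo a b := Ioo_subset_Ioo hx.1 hy.2
  have hnorm {z : ℝ} (hz : z ∈ Icc a b) : IntervalIntegrable (fun s => ‖e' s‖) volume a z :=
    (intervalIntegrable_iff_integrableOn_Ioo_of_le hz.1).2
      (IntegrableOn.mono_set he'.norm (Ioo_subset_Ioo_right hz.2))
  calc dist (e x) (e y) = ‖∫ s in Ioo x y, e' s‖ := by
        rw [setIntegral_Ioo_eq_sub_of_hasDerivAt hxy (he.mono (Icc_subset_Icc hx.1 hy.2))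
          (fun s hs => hderiv s (hsub hs)) (he'.mono_set hsub), dist_comm, dist_eq_norm]
    _ ≤ ∫ s in Ioo x y, ‖e' s‖ := norm_integral_le_integral_norm _
    _ = (∫ s in a..y, ‖e' s‖) - ∫ s in a..x, ‖e' s‖ := by
        rw [intervalIntegral.integral_interval_sub_left (hnorm hy) (hnorm hx),
          intervalIntegral.integral_of_le hxy, integral_Ioc_eq_integral_Ioo]
    _ ≤ dist (∫ s in a..x, ‖e' s‖) (∫ s in a..y, ‖e' s‖) := by
        rw [dist_comm, dist_eq]
        exact le_abs_self _

lemma absolutelyContinuousOnInterval_norm (hab : a ≤ b) (he : ContinuousOn e (Icc a b))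
    (hderiv : ∀ s ∈ Ioo a b, HasDerivAt e (e' s) s) (he' : IntegrableOn e' (Ioo a b)) :
    AbsolutelyContinuousOnInterval (fun s => ‖e s‖) a b := by
  have hnorm : IntervalIntegrable (fun s => ‖e' s‖) volume a b :=
    (intervalIntegrable_iff_integrableOn_Ioo_of_le hab).2 he'.norm
  refine absolutelyContinuousOnInterval_of_dist_le
    (hnorm.absolutelyContinuousOnInterval_intervalIntegral left_mem_uIcc) fun x hx y hy => ?_
  rw [uIcc_of_le hab] at hx hy
  exact (dist_eq_norm (e x) (e y) ▸ dist_norm_norm_le (e x) (e y)).trans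
    (dist_le_dist_integral_norm_of_hasDerivAt he hderiv he' hx hy)

lemma integrableOn_deriv_norm (hab : a ≤ b) (he : ContinuousOn e (Icc a b))
    (hderiv : ∀ s ∈ Ioo a b, HasDerivAt e (e' s) s) (he' : IntegrableOn e' (Ioo a b)) :
    IntegrableOn (deriv fun s => ‖e s‖) (Ioo a b) :=
  (intervalIntegrable_iff_integrableOn_Ioo_of_le hab).1
    (absolutelyContinuousOnInterval_norm hab he hderiv he').intervalIntegrable_deriv

lemma setIntegral_deriv_norm (hab : a ≤ b) (he : ContinuousOn e (Icc a b))
    (hderiv : ∀ s ∈ Ioo a b, HasDerivAt e (e' s) s) (he' : IntegrableOn e' (Ioo a b)) :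
    ∫ s in Ioo a b, deriv (fun x => ‖e x‖) s = ‖e b‖ - ‖e a‖ := by
  rw [← integral_Ioc_eq_integral_Ioo, ← intervalIntegral.integral_of_le hab]
  exact (absolutelyContinuousOnInterval_norm hab he hderiv he').integral_deriv_eq_sub

lemma setIntegral_deriv_norm_le_setIntegral_apply (hab : a ≤ b) (he : ContinuousOn e (Icc a b))
    (hderiv : ∀ s ∈ Ioo a b, HasDerivAt e (e' s) s) (he' : IntegrableOn e' (Ioo a b))
    {u : StrongDual ℝ E} (hu : ‖u‖ ≤ 1) (hub : u (e b) = ‖e b‖) :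
    ∫ s in Ioo a b, deriv (fun x => ‖e x‖) s ≤ ∫ s in Ioo a b, u (e' s) := by
  rw [setIntegral_deriv_norm hab he hderiv he', u.integral_comp_comm he',
    setIntegral_Ioo_eq_sub_of_hasDerivAt hab he hderiv he', map_sub, hub]
  linarith [(le_abs_self _).trans (u.le_of_opNorm_le hu (e a))]

/-- The functional `u` norms `e b`, so it controls the increments of `‖e‖` over every interval
ending at `b`; a monotone weight `g` is a superposition of such intervals. -/
theorem setIntegral_mul_deriv_norm_le {g : ℝ → ℝ} (he : ContinuousOn e (Icc a b))
    (hderiv : ∀ s ∈ Ioo a b, HasDerivAt e (e' s) s) (he' : IntegrableOn e' (Ioo a b))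
    (hg : MonotoneOn g (Ioo a b)) (hg₀ : ∀ s ∈ Ioo a b, 0 ≤ g s)
    (hge' : IntegrableOn (fun s => g s * ‖e' s‖) (Ioo a b)) {u : StrongDual ℝ E}
    (hu : ‖u‖ ≤ 1) (hub : u (e b) = ‖e b‖) :
    ∫ s in Ioo a b, g s * deriv (fun x => ‖e x‖) s ≤ u (∫ s in Ioo a b, g s • e' s) := by
  have hgm : AEStronglyMeasurable g (volume.restrict (Ioo a b)) :=
    (aemeasurable_restrict_of_monotoneOn measurableSet_Ioo hg).aestronglyMeasurable
  have hsmul : IntegrableOn (fun s => g s • e' s) (Ioo a b) := by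
    refine Integrable.mono' hge' (hgm.smul he'.aestronglyMeasurable)
      (ae_restrict_of_forall_mem measurableSet_Ioo fun s hs => ?_)
    rw [norm_smul, norm_of_nonneg (hg₀ s hs)]
  have hgv := integrableOn_mul_deriv_norm hgm hg₀ hderiv hge'
  have hgu : IntegrableOn (fun s => g s * u (e' s)) (Ioo a b) := by
    have h := u.integrable_comp hsmul
    simp only [map_smul, smul_eq_mul] at h
    exact h
  have htail : ∀ τ ∈ Ico a b, 0 ≤ ∫ s in Ioo τ b, (u (e' s) - deriv (fun x => ‖e x‖) s) := by
    intro τ hτ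
    have hIoo : Ioo τ b ⊆ Ioo a b := Ioo_subset_Ioo_left hτ.1
    have he_tail := he.mono (Icc_subset_Icc_left hτ.1)
    have hderiv_tail : ∀ s ∈ Ioo τ b, HasDerivAt e (e' s) s := fun s hs => hderiv s (hIoo hs)
    have he'_tail := he'.mono_set hIoo
    rw [integral_sub (u.integrable_comp he'_tail)
      (integrableOn_deriv_norm hτ.2.le he_tail hderiv_tail he'_tail), sub_nonneg]
    exact setIntegral_deriv_norm_le_setIntegral_apply hτ.2.le he_tail hderiv_tail he'_tail hu hub
  have hgψ : IntegrableOn (fun s => g s * (u (e' s) - deriv (fun x => ‖e x‖) s)) (Ioo a b) := by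
    simp only [mul_sub]
    exact hgu.sub hgv
  have hψ := (u.integrable_comp he').aestronglyMeasurable.sub
    (measurable_deriv fun x => ‖e x‖).aestronglyMeasurable
  have hnonneg := integral_mul_nonneg_of_monotoneOn hg hg₀ hψ hgψ htail
  have hcomm := u.integral_comp_comm hsmul
  simp only [Pi.sub_apply, mul_sub] at hnonneg
  simp only [map_smul, smul_eq_mul] at hcomm
  rw [integral_sub hgu hgv, hcomm] at hnonneg
  exact sub_nonneg.1 hnonneg

end NormDerivative

section CaputoComparison

open Set

variable {α t : ℝ}

lemma monotoneOn_sub_rpow_neg (hα : 0 ≤ α) (t : ℝ) :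
    MonotoneOn (fun s => (t - s) ^ (-α)) (Iio t) := fun _ _ _ hy hxy =>
  rpow_le_rpow_of_nonpos (sub_pos.2 hy) (sub_le_sub_left hxy t) (neg_nonpos.2 hα)

lemma integrableOn_of_integrableOn_rpow_mul_norm {E : Type*} [NormedAddCommGroup E]
    {f : ℝ → E} (hα : 0 ≤ α) (hf : AEStronglyMeasurable f (volume.restrict (Ioo 0 t)))
    (hint : IntegrableOn (fun s => (t - s) ^ (-α) * ‖f s‖) (Ioo 0 t)) :
    IntegrableOn f (Ioo 0 t) := by
  refine Integrable.mono' (Integrable.const_mul hint (t ^ α)) hf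
    (ae_restrict_of_forall_mem measurableSet_Ioo fun s hs => ?_)
  have hts : 0 < t - s := sub_pos.2 hs.2
  have hweight : 1 ≤ t ^ α * (t - s) ^ (-α) := by
    rw [rpow_neg hts.le, ← div_eq_mul_inv, one_le_div (rpow_pos_of_pos hts α)]
    exact rpow_le_rpow hts.le (sub_le_self t hs.1.le) hα
  rw [← mul_assoc]
  exact le_mul_of_one_le_left (norm_nonneg _) hweight

lemma volterraConv_caputoKernel_eq_add {v : ℝ → ℝ} (c : ℝ)
    (hv : IntegrableOn v (Ioo 0 t))
    (hint : IntegrableOn (fun s => (t - s) ^ (-α) * v s) (Ioo 0 t)) :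
    volterraConv (caputoKernel α c) v t =
      1 / Gamma (1 - α) * (∫ s in Ioo 0 t, (t - s) ^ (-α) * v s) + c * ∫ s in Ioo 0 t, v s := by
  have hkernel (s : ℝ) : caputoKernel α c (t - s) * v s =
      1 / Gamma (1 - α) * ((t - s) ^ (-α) * v s) + c * v s := by
    rw [caputoKernel, rlKernel, sub_sub_cancel_left]
    ring
  simp only [volterraConv, hkernel]
  rw [integral_add (Integrable.const_mul hint _) (Integrable.const_mul hv _),
    integral_const_mul, integral_const_mul]

variable {H : Type*} [NormedAddCommGroup H] [InnerProductSpace ℝ H] [CompleteSpace H]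
  {e e' : ℝ → H}

lemma setIntegral_rpow_mul_deriv_norm_le_inner (hα : 0 ≤ α) (he : ContinuousOn e (Icc 0 t))
    (hderiv : ∀ s ∈ Ioo 0 t, HasDerivAt e (e' s) s) (he' : IntegrableOn e' (Ioo 0 t))
    (hint : IntegrableOn (fun s => (t - s) ^ (-α) * ‖e' s‖) (Ioo 0 t)) :
    ∫ s in Ioo 0 t, (t - s) ^ (-α) * deriv (fun x => ‖e x‖) s ≤
      ‖e t‖⁻¹ * ⟪∫ s in Ioo 0 t, (t - s) ^ (-α) • e' s, e t⟫ := by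
  have hu : ‖innerSL ℝ (‖e t‖⁻¹ • e t)‖ ≤ 1 := by
    rw [innerSL_apply_norm, norm_smul, norm_inv, norm_norm]
    exact inv_mul_le_one
  have hut : innerSL ℝ (‖e t‖⁻¹ • e t) (e t) = ‖e t‖ := by
    rw [innerSL_apply_apply, real_inner_smul_left, real_inner_self_eq_norm_mul_norm, ← mul_assoc,
      inv_mul_mul_self]
  have h := setIntegral_mul_deriv_norm_le he hderiv he'
    ((monotoneOn_sub_rpow_neg hα t).mono Ioo_subset_Iio_self)
    (fun s hs => rpow_nonneg (sub_nonneg.2 hs.2.le) _) hint hu hut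
  rwa [innerSL_apply_apply, real_inner_smul_left, real_inner_comm] at h

lemma volterraConv_caputoKernel_deriv_norm_le (hα : 0 ≤ α) (hα₁ : α < 1) {c ρ : ℝ}
    (hρ : 0 ≤ ρ) (ht : 0 ≤ t) (he : ContinuousOn e (Icc 0 t)) (he0 : e 0 = 0)
    (hderiv : ∀ s ∈ Ioo 0 t, HasDerivAt e (e' s) s) (he' : IntegrableOn e' (Ioo 0 t))
    (hint : IntegrableOn (fun s => (t - s) ^ (-α) * ‖e' s‖) (Ioo 0 t))
    (hres : 1 / Gamma (1 - α) * ⟪∫ s in Ioo 0 t, (t - s) ^ (-α) • e' s, e t⟫ + c * ‖e t‖ ^ 2 ≤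
      ρ * ‖e t‖) :
    volterraConv (caputoKernel α c) (deriv fun s => ‖e s‖) t ≤ ρ := by
  have hΓ : 0 < Gamma (1 - α) := Gamma_pos_of_pos (sub_pos.2 hα₁)
  have hweight : AEStronglyMeasurable (fun s => (t - s) ^ (-α)) (volume.restrict (Ioo 0 t)) :=
    ((measurable_const.sub measurable_id).pow_const _).aestronglyMeasurable
  rw [volterraConv_caputoKernel_eq_add c (integrableOn_deriv_norm ht he hderiv he')
    (integrableOn_mul_deriv_norm hweight (fun s hs => rpow_nonneg (sub_nonneg.2 hs.2.le) _)
      hderiv hint), setIntegral_deriv_norm ht he hderiv he', he0, norm_zero, sub_zero]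
  refine (add_le_add_left (mul_le_mul_of_nonneg_left
    (setIntegral_rpow_mul_deriv_norm_le_inner hα he hderiv he' hint)
    (one_div_nonneg.2 hΓ.le)) _).trans ?_
  rcases (norm_nonneg (e t)).eq_or_lt with hzero | hpos
  · simpa only [← hzero, inv_zero, zero_mul, mul_zero, add_zero] using hρ
  · refine le_of_mul_le_mul_right (le_trans (le_of_eq ?_) hres) hpos
    field_simp

end CaputoComparison

theorem apriori_error_bound_L2_general
    {H : Type*} [NormedAddCommGroup H] [InnerProductSpace ℝ H] [CompleteSpace H]
    (α lam T : ℝ) (hα : α ∈ Set.Ioo (0 : ℝ) 1)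
    (e e' : ℝ → H) (r : ℝ → ℝ)
    (he_cont : ContinuousOn e (Set.Icc 0 T))
    (he0 : e 0 = 0)
    (hderiv : ∀ s ∈ Set.Ioo 0 T, HasDerivAt e (e' s) s)
    (hint : ∀ t ∈ Set.Ioc 0 T, IntegrableOn (fun s => (t - s) ^ (-α) * ‖e' s‖) (Set.Ioo 0 t))
    (hr_nonneg : ∀ t ∈ Set.Ioc 0 T, 0 ≤ r t)
    (hr_int : ∀ t ∈ Set.Ioc 0 T,
      IntegrableOn (fun s => (t - s) ^ (α - 1) * mittagLeffler α α (-lam * (t - s) ^ α) * r s)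
        (Set.Ioo 0 t))
    (hres : ∀ t ∈ Set.Ioc 0 T,
      (1 / Real.Gamma (1 - α)) * ⟪(∫ s in Set.Ioo 0 t, (t - s) ^ (-α) • e' s), e t⟫
        + lam * ‖e t‖ ^ 2 ≤ r t * ‖e t‖) :
    ∀ t ∈ Set.Ioc 0 T,
      ‖e t‖ ≤ ∫ s in Set.Ioo 0 t,
        (t - s) ^ (α - 1) * mittagLeffler α α (-lam * (t - s) ^ α) * r s := by
  intro t ht
  obtain ⟨hα₀, hα₁⟩ := hα
  have he {s : ℝ} (hs : s ∈ Set.Ioc 0 T) : ContinuousOn e (Set.Icc 0 s) :=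
    he_cont.mono (Set.Icc_subset_Icc_right hs.2)
  have hd {s : ℝ} (hs : s ∈ Set.Ioc 0 T) : ∀ x ∈ Set.Ioo 0 s, HasDerivAt e (e' x) x :=
    fun x hx => hderiv x ⟨hx.1, hx.2.trans_le hs.2⟩
  have he' {s : ℝ} (hs : s ∈ Set.Ioc 0 T) : IntegrableOn e' (Set.Ioo 0 s) :=
    integrableOn_of_integrableOn_rpow_mul_norm hα₀.le
      (aestronglyMeasurable_of_hasDerivAt (hd hs)) (hint s hs)
  have hv := integrableOn_deriv_norm ht.1.le (he ht) (hd ht) (he' ht)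
  calc ‖e t‖ = ∫ s in Set.Ioo 0 t, deriv (fun x => ‖e x‖) s := by
        rw [setIntegral_deriv_norm ht.1.le (he ht) (hd ht) (he' ht), he0, norm_zero, sub_zero]
    _ = volterraConv (mlKernel α α (-lam))
          (volterraConv (caputoKernel α lam) (deriv fun s => ‖e s‖)) t :=
        (volterraConv_mlKernel_volterraConv_caputoKernel hα₀ hα₁ lam hv).symm
    _ ≤ volterraConv (mlKernel α α (-lam)) r t :=
        volterraConv_mono_right (fun x hx => (mlKernel_pos hα₀ hα₁.le le_rfl (-lam) hx.1).le)
          (volterraConvExistsAt_mlKernel_volterraConv_caputoKernel hα₀ hα₁ lam (-lam) hv)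
          (hr_int t ht) fun s hs =>
            have hs' : s ∈ Set.Ioc 0 T := ⟨hs.1, hs.2.le.trans ht.2⟩
            volterraConv_caputoKernel_deriv_norm_le hα₀.le hα₁ (hr_nonneg s hs') hs.1.le
              (he hs') he0 (hd hs') (he' hs') (hint s hs') (hres s hs')

/-- Main a posteriori error bound in abstract form:
`‖e(t)‖ ≤ (D_t^α + λ)⁻¹ r (t) = ∫_0^t (t-s)^(α-1) E_{α,α}(-λ(t-s)^α) r(s) ds`,
where the error `e` with `e(0) = 0` satisfies the tested residual inequality with
coercivity constant `λ` and residual norm `r`. -/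
theorem apriori_error_bound_L2
    {H : Type*} [NormedAddCommGroup H] [InnerProductSpace ℝ H] [CompleteSpace H]
    (α lam T : ℝ) (hα : α ∈ Set.Ioo (0 : ℝ) 1) (hT : 0 < T)
    (e e' : ℝ → H) (r : ℝ → ℝ)
    (he_cont : ContinuousOn e (Set.Icc 0 T))
    (he0 : e 0 = 0)
    (hderiv : ∀ s ∈ Set.Ioo 0 T, HasDerivAt e (e' s) s)
    (hint : ∀ t ∈ Set.Ioc 0 T, IntegrableOn (fun s => (t - s) ^ (-α) * ‖e' s‖) (Set.Ioo 0 t))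
    (hlip : ∀ ε ∈ Set.Ioo 0 T, ∃ K : NNReal, LipschitzOnWith K (fun s => ‖e s‖) (Set.Icc ε T))
    (hr_nonneg : ∀ t ∈ Set.Ioc 0 T, 0 ≤ r t)
    (hr_cont : ContinuousOn r (Set.Ioc 0 T))
    (hr_int : ∀ t ∈ Set.Ioc 0 T,
      IntegrableOn (fun s => (t - s) ^ (α - 1) * mittagLeffler α α (-lam * (t - s) ^ α) * r s)
        (Set.Ioo 0 t))
    (hres : ∀ t ∈ Set.Ioc 0 T,
      (1 / Real.Gamma (1 - α)) * ⟪(∫ s in Set.Ioo 0 t, (t - s) ^ (-α) • e' s), e t⟫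
        + lam * ‖e t‖ ^ 2 ≤ r t * ‖e t‖) :
    ∀ t ∈ Set.Ioc 0 T,
      ‖e t‖ ≤ ∫ s in Set.Ioo 0 t,
        (t - s) ^ (α - 1) * mittagLeffler α α (-lam * (t - s) ^ α) * r s :=
  apriori_error_bound_L2_general α lam T hα e e' r he_cont he0 hderiv hint hr_nonneg hr_int hres
end

section
/- Let H be a real Hilbert space, α ∈ (0,1), β := 1−α, λ ≥ 0, τ > 0, and T > 0. Let e : [0,T] → H be continuous with e(0) = 0, differentiable on (0,T), such that s ↦ (t−s)^{−α}‖e′(s)‖ is integrable on (0,t) for every t ∈ (0,T], and such that t ↦ ‖e(t)‖ is Lipschitz continuous on [ε, T] for every ε ∈ (0,T). Let r : (0,T] → ℝ be nonnegative and continuous, and suppose that for every t ∈ (0,T]: (1/Γ(1−α)) ⟨∫_0^t (t−s)^{−α} e′(s) ds, e(t)⟩ + λ ‖e(t)‖² ≤ r(t) ‖e(t)‖. Define ρ(s) := s^{−β}(1 − (max{1−s, 0})^β), 𝓔₁(s) := max{τ, s}^{α−1}, and 𝓡₁(s) := (1/Γ(1−α)) s^{−1} ρ(τ/s) + λ 𝓔₁(s)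 for s > 0. Then for every t ∈ (0,T], provided the supremum is finite: ‖e(t)‖ ≤ max{τ, t}^{α−1} · sup_{0 < s ≤ t} [ r(s) / 𝓡₁(s) ]. -/
open MeasureTheory Real
open scoped RealInnerProductSpace

/-!
At a point `t` where a function attains its maximum over `[0, t]`, its Riemann–Liouville derivative
is at least `t^(-α) / Γ(1-α)` times the maximum, by integration by parts. If `‖e‖` exceeded a
nonnegative barrier `B`, this could be applied at a positive maximum of `‖e‖ - B`, after projecting
`e` onto the direction it has there, and the residual would be larger than `D^α B + λ B`. The
theorem is the case of `B = M * 𝓔₁`, where `M` is the supremum of `r / 𝓡₁`: since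
`d/ds (s^(-β) (t-s)^β) = -β t s^(-β-1) (t-s)^(β-1)`, the derivative `D^α 𝓔₁` is elementary, and
`D^α 𝓔₁ + λ 𝓔₁ = 𝓡₁`.
-/

section

open Set Filter Topology

section MonotoneKernel

variable {a b c : ℝ} {k k' g g' : ℝ → ℝ}

lemma mul_sub_sub_mul_sub_le_integral (hab : a ≤ b) (hk : ContinuousOn k (Icc a b))
    (hk' : ∀ s ∈ Ioo a b, HasDerivAt k (k' s) s) (hk'_nonneg : ∀ s ∈ Ioo a b, 0 ≤ k' s)
    (hg : ContinuousOn g (Icc a b)) (hg' : ∀ s ∈ Ioo a b, HasDerivWithinAt g (g' s) (Ioi s) s)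
    (hint : IntegrableOn (fun s => k s * g' s) (Icc a b)) (hgc : ∀ s ∈ Ioo a b, g s ≤ c) :
    k a * (c - g a) - k b * (c - g b) ≤ ∫ s in a..b, k s * g' s := by
  have hderiv : ∀ s ∈ Ioo a b, HasDerivWithinAt (fun s => k s * (g s - c))
      (k' s * (g s - c) + k s * g' s) (Ioi s) s := fun s hs =>
    (hk' s hs).hasDerivWithinAt.mul ((hg' s hs).sub_const c)
  have hle : ∀ s ∈ Ioo a b, k' s * (g s - c) + k s * g' s ≤ k s * g' s := fun s hs => by
    linarith [mul_nonpos_of_nonneg_of_nonpos (hk'_nonneg s hs) (sub_nonpos.2 (hgc s hs))]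
  calc k a * (c - g a) - k b * (c - g b) = k b * (g b - c) - k a * (g a - c) := by ring
    _ ≤ ∫ s in a..b, k s * g' s :=
      intervalIntegral.sub_le_integral_of_hasDeriv_right_of_le hab
        (hk.mul (hg.sub continuousOn_const)) hderiv hint hle

lemma mul_sub_le_integral_abs (hab : a ≤ b) (hc : 0 ≤ c) (hck : ∀ s ∈ Ioo a b, c ≤ k s)
    (hg : ContinuousOn g (Icc a b)) (hg' : ∀ s ∈ Ioo a b, HasDerivWithinAt g (g' s) (Ioi s) s)
    (hint : IntegrableOn (fun s => k s * g' s) (Icc a b)) :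
    c * (g b - g a) ≤ ∫ s in a..b, |k s * g' s| := by
  have hle : ∀ s ∈ Ioo a b, c * g' s ≤ |k s * g' s| := fun s hs =>
    calc c * g' s ≤ c * |g' s| := by gcongr; exact le_abs_self _
      _ ≤ |k s| * |g' s| := by gcongr; exact (hck s hs).trans (le_abs_self _)
      _ = |k s * g' s| := (abs_mul _ _).symm
  rw [mul_sub]
  exact intervalIntegral.sub_le_integral_of_hasDeriv_right_of_le hab
    (continuousOn_const.mul hg) (fun s hs => (hg' s hs).const_mul c) hint.abs hle

lemma tendsto_integral_add_integral_abs {f : ℝ → ℝ} (hab : a < b)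
    (hf : IntegrableOn f (Icc a b)) :
    Tendsto (fun x => (∫ s in a..x, f s) + ∫ s in x..b, |f s|) (𝓝[<] b)
      (𝓝 (∫ s in a..b, f s)) := by
  rw [← uIcc_of_le hab.le] at hf
  have hcont := (intervalIntegral.continuousOn_primitive_interval hf).add
    (intervalIntegral.continuousOn_primitive_interval_left hf.abs)
  have hlim := (hcont b right_mem_uIcc).mono (Ioo_subset_Icc_self.trans_eq (uIcc_of_le hab.le).symm)
  simpa only [ContinuousWithinAt, nhdsWithin_Ioo_eq_nhdsLT hab, Pi.add_def,
    intervalIntegral.integral_same, add_zero] using hlim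

/- Integrating by parts on `[a, x]` only and letting `x → b` allows a singularity of `k` at `b`. -/
theorem kernel_mul_sub_le_integral (hab : a < b) (hk : ContinuousOn k (Ico a b))
    (hk_nonneg : 0 ≤ k a) (hk' : ∀ s ∈ Ioo a b, HasDerivAt k (k' s) s)
    (hk'_nonneg : ∀ s ∈ Ioo a b, 0 ≤ k' s)
    (hg : ContinuousOn g (Icc a b)) (hg' : ∀ s ∈ Ioo a b, HasDerivWithinAt g (g' s) (Ioi s) s)
    (hint : IntegrableOn (fun s => k s * g' s) (Ioo a b)) (hmax : IsMaxOn g (Icc a b) b) :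
    k a * (g b - g a) ≤ ∫ s in Ioo a b, k s * g' s := by
  have hint' : IntegrableOn (fun s => k s * g' s) (Icc a b) :=
    (integrableOn_Icc_iff_integrableOn_Ioo).2 hint
  have hk_mono : MonotoneOn k (Ico a b) :=
    monotoneOn_of_hasDerivWithinAt_nonneg (convex_Ico a b) hk
      (fun s hs => (hk' s (by simpa using hs)).hasDerivWithinAt)
      (fun s hs => hk'_nonneg s (by simpa using hs))
  have hle : ∀ x ∈ Ioo a b, k a * (g b - g a) ≤
      (∫ s in a..x, k s * g' s) + ∫ s in x..b, |k s * g' s| := fun x ⟨hax, hxb⟩ => by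
    have hleft := mul_sub_sub_mul_sub_le_integral hax.le
      (hk.mono (Icc_subset_Ico_right hxb)) (fun s hs => hk' s ⟨hs.1, hs.2.trans hxb⟩)
      (fun s hs => hk'_nonneg s ⟨hs.1, hs.2.trans hxb⟩)
      (hg.mono (Icc_subset_Icc_right hxb.le)) (fun s hs => hg' s ⟨hs.1, hs.2.trans hxb⟩)
      (hint'.mono_set (Icc_subset_Icc_right hxb.le))
      (fun s hs => hmax ⟨hs.1.le, (hs.2.trans hxb).le⟩)
    have hkx : 0 ≤ k x := hk_nonneg.trans (hk_mono ⟨le_rfl, hab⟩ ⟨hax.le, hxb⟩ hax.le)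
    have hright := mul_sub_le_integral_abs hxb.le hkx
      (fun s hs => hk_mono ⟨hax.le, hxb⟩ ⟨(hax.trans hs.1).le, hs.2⟩ hs.1.le)
      (hg.mono (Icc_subset_Icc_left hax.le)) (fun s hs => hg' s ⟨hax.trans hs.1, hs.2⟩)
      (hint'.mono_set (Icc_subset_Icc_left hax.le))
    linarith
  rw [← integral_Ioc_eq_integral_Ioo, ← intervalIntegral.integral_of_le hab.le]
  exact ge_of_tendsto (tendsto_integral_add_integral_abs hab hint')
    (eventually_of_mem (Ioo_mem_nhdsLT hab) hle)

end MonotoneKernel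

section FractionalDerivative

variable {E F : Type*} [NormedAddCommGroup E] [NormedSpace ℝ E] [NormedAddCommGroup F]
  [NormedSpace ℝ F] {α t : ℝ} {u u' v v' : ℝ → E}

/-- Integrability of the integrand of the Caputo derivative of order `α` at `t` of a function
with (right) derivative `v'`. -/
def CaputoIntegrable (α : ℝ) (v' : ℝ → E) (t : ℝ) : Prop :=
  IntegrableOn (fun s => (t - s) ^ (-α) • v' s) (Ioo 0 t)

/-- The Caputo derivative of order `α`. Its argument is the (right) derivative `v'` of the
function `v` that is differentiated, so that `v` may have kinks. -/
noncomputable def caputoDeriv (α : ℝ) (v' : ℝ → E) (t : ℝ) : E :=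
  (1 / Gamma (1 - α)) • ∫ s in Ioo 0 t, (t - s) ^ (-α) • v' s

/-- The Riemann–Liouville derivative of order `α` of a function `v` with (right) derivative `v'`.
It is the Caputo derivative of the function that agrees with `v` on `(0, ∞)` and jumps up from the
value `0` at `0`. -/
noncomputable def riemannLiouvilleDeriv (α : ℝ) (v v' : ℝ → E) (t : ℝ) : E :=
  caputoDeriv α v' t + (t ^ (-α) / Gamma (1 - α)) • v 0

lemma CaputoIntegrable.sub (hu : CaputoIntegrable α u' t) (hv : CaputoIntegrable α v' t) :
    CaputoIntegrable α (u' - v') t := by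
  simpa only [CaputoIntegrable, IntegrableOn, Pi.sub_apply, smul_sub] using! Integrable.sub hu hv

lemma CaputoIntegrable.const_smul (hv : CaputoIntegrable α v' t) (c : ℝ) :
    CaputoIntegrable α (c • v') t := by
  simpa only [CaputoIntegrable, IntegrableOn, Pi.smul_apply, smul_comm _ c] using!
    Integrable.smul c hv

lemma CaputoIntegrable.clm_comp (L : E →L[ℝ] F) (hv : CaputoIntegrable α v' t) :
    CaputoIntegrable α (L ∘ v') t := by
  simpa only [CaputoIntegrable, IntegrableOn, Function.comp_apply, map_smul] using!
    L.integrable_comp hv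

lemma caputoDeriv_clm_comp [CompleteSpace E] [CompleteSpace F] (L : E →L[ℝ] F)
    (hv : CaputoIntegrable α v' t) :
    caputoDeriv α (L ∘ v') t = L (caputoDeriv α v' t) := by
  simp only [caputoDeriv, Function.comp_apply, ← map_smul]
  rw [L.integral_comp_comm hv, map_smul]

lemma riemannLiouvilleDeriv_sub (hu : CaputoIntegrable α u' t) (hv : CaputoIntegrable α v' t) :
    riemannLiouvilleDeriv α (u - v) (u' - v') t =
      riemannLiouvilleDeriv α u u' t - riemannLiouvilleDeriv α v v' t := by
  simp only [riemannLiouvilleDeriv, caputoDeriv, Pi.sub_apply, smul_sub]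
  rw [integral_sub hu hv, smul_sub]
  abel

lemma riemannLiouvilleDeriv_const_smul (c : ℝ) (v v' : ℝ → E) :
    riemannLiouvilleDeriv α (c • v) (c • v') t =
      c • riemannLiouvilleDeriv α v v' t := by
  simp only [riemannLiouvilleDeriv, caputoDeriv, Pi.smul_apply, smul_comm _ c, integral_smul,
    smul_add]

lemma riemannLiouvilleDeriv_of_zero (hv : v 0 = 0) :
    riemannLiouvilleDeriv α v v' t = caputoDeriv α v' t := by
  rw [riemannLiouvilleDeriv, hv, smul_zero, add_zero]

lemma caputoIntegrable_of_norm [CompleteSpace E] (hv : ∀ s ∈ Ioo 0 t, HasDerivAt v (v' s) s)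
    (hint : IntegrableOn (fun s => (t - s) ^ (-α) * ‖v' s‖) (Ioo 0 t)) :
    CaputoIntegrable α v' t := by
  have hmeas : AEStronglyMeasurable v' (volume.restrict (Ioo 0 t)) := by
    refine (aestronglyMeasurable_deriv v _).congr ?_
    filter_upwards [ae_restrict_mem measurableSet_Ioo] with s hs using (hv s hs).deriv
  refine hint.mono' (.smul (Measurable.aestronglyMeasurable (by fun_prop)) hmeas) ?_
  filter_upwards [ae_restrict_mem measurableSet_Ioo] with s hs
  rw [norm_smul, norm_of_nonneg (rpow_nonneg (sub_nonneg.2 hs.2.le) _)]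

theorem rpow_div_gamma_mul_le_riemannLiouvilleDeriv {g g' : ℝ → ℝ} (hα : α ∈ Ico 0 1) (ht : 0 < t)
    (hg : ContinuousOn g (Icc 0 t)) (hg' : ∀ s ∈ Ioo 0 t, HasDerivWithinAt g (g' s) (Ioi s) s)
    (hint : CaputoIntegrable α g' t) (hmax : IsMaxOn g (Icc 0 t) t) :
    t ^ (-α) / Gamma (1 - α) * g t ≤ riemannLiouvilleDeriv α g g' t := by
  have hkey : t ^ (-α) * (g t - g 0) ≤ ∫ s in Ioo 0 t, (t - s) ^ (-α) * g' s := by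
    have hk : ∀ s ∈ Ioo 0 t,
        HasDerivAt (fun s => (t - s) ^ (-α)) (α * (t - s) ^ (-α - 1)) s := fun s hs => by
      simpa using ((hasDerivAt_id s).const_sub t).rpow_const (p := -α)
        (Or.inl (sub_pos.2 hs.2).ne')
    simpa only [sub_zero] using kernel_mul_sub_le_integral ht
      (ContinuousOn.rpow_const (by fun_prop) fun s hs => Or.inl (sub_pos.2 hs.2).ne')
      (by positivity) hk
      (fun s hs => mul_nonneg hα.1 (rpow_nonneg (sub_nonneg.2 hs.2.le) _)) hg hg' hint hmax
  have hΓ : 0 < Gamma (1 - α) := Gamma_pos_of_pos (sub_pos.2 hα.2)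
  calc t ^ (-α) / Gamma (1 - α) * g t
      = 1 / Gamma (1 - α) * (t ^ (-α) * (g t - g 0)) + t ^ (-α) / Gamma (1 - α) * g 0 := by ring
    _ ≤ riemannLiouvilleDeriv α g g' t := by
      unfold riemannLiouvilleDeriv caputoDeriv
      simp only [smul_eq_mul]
      gcongr

end FractionalDerivative

section Comparison

variable {H : Type*} [NormedAddCommGroup H] [InnerProductSpace ℝ H] [CompleteSpace H]
  {α lam t T : ℝ} {e e' : ℝ → H} {B B' : ℝ → ℝ}

/- The maximum principle is applied to `s ↦ ⟪e t, e s⟫ - ‖e t‖ * B s`, which unlike `‖e‖ - B` is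
differentiable from the right, and which by Cauchy–Schwarz is also maximal at `t`. -/
lemma riemannLiouvilleDeriv_mul_norm_lt_inner (hα : α ∈ Ico 0 1) (ht : 0 < t)
    (he : ContinuousOn e (Icc 0 t)) (he0 : e 0 = 0)
    (he' : ∀ s ∈ Ioo 0 t, HasDerivAt e (e' s) s) (he'_int : CaputoIntegrable α e' t)
    (hB : ContinuousOn B (Icc 0 t)) (hB' : ∀ s ∈ Ioo 0 t, HasDerivWithinAt B (B' s) (Ioi s) s)
    (hB'_int : CaputoIntegrable α B' t) (hBt : 0 ≤ B t)
    (hmax : IsMaxOn (fun s => ‖e s‖ - B s) (Icc 0 t) t) (hlt : B t < ‖e t‖) :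
    riemannLiouvilleDeriv α B B' t * ‖e t‖ < ⟪caputoDeriv α e' t, e t⟫ := by
  set L : H →L[ℝ] ℝ := innerSL ℝ (e t)
  have hN : 0 < ‖e t‖ := hBt.trans_lt hlt
  have hg_max : IsMaxOn (L ∘ e - ‖e t‖ • B) (Icc 0 t) t := fun s hs =>
    calc L (e s) - ‖e t‖ * B s ≤ ‖e t‖ * ‖e s‖ - ‖e t‖ * B s := by
          gcongr; exact real_inner_le_norm _ _
      _ = ‖e t‖ * (‖e s‖ - B s) := by ring
      _ ≤ ‖e t‖ * (‖e t‖ - B t) := mul_le_mul_of_nonneg_left (hmax hs) hN.le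
      _ = L (e t) - ‖e t‖ * B t := by
          rw [innerSL_apply_apply, real_inner_self_eq_norm_sq]; ring
  have hprinciple := rpow_div_gamma_mul_le_riemannLiouvilleDeriv hα ht
    ((L.continuous.comp_continuousOn he).sub (hB.const_smul ‖e t‖))
    (fun s hs => (L.hasFDerivAt.comp_hasDerivAt s (he' s hs)).hasDerivWithinAt.sub
      ((hB' s hs).const_smul ‖e t‖))
    ((he'_int.clm_comp L).sub (hB'_int.const_smul ‖e t‖)) hg_max
  have hg_pos : 0 < t ^ (-α) / Gamma (1 - α) * (L ∘ e - ‖e t‖ • B) t := by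
    have hΓ : 0 < Gamma (1 - α) := Gamma_pos_of_pos (sub_pos.2 hα.2)
    have hgap : (L ∘ e - ‖e t‖ • B) t = ‖e t‖ * (‖e t‖ - B t) := by
      rw [Pi.sub_apply, Pi.smul_apply, Function.comp_apply,
        innerSL_apply_apply, real_inner_self_eq_norm_sq, smul_eq_mul]; ring
    have := sub_pos.2 hlt
    rw [hgap]
    positivity
  have hsplit : riemannLiouvilleDeriv α (L ∘ e - ‖e t‖ • B) (L ∘ e' - ‖e t‖ • B') t =
      ⟪caputoDeriv α e' t, e t⟫ - riemannLiouvilleDeriv α B B' t * ‖e t‖ := by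
    rw [riemannLiouvilleDeriv_sub (he'_int.clm_comp L) (hB'_int.const_smul ‖e t‖),
      riemannLiouvilleDeriv_of_zero (by rw [Function.comp_apply, he0, map_zero]),
      caputoDeriv_clm_comp L he'_int,
      riemannLiouvilleDeriv_const_smul, innerSL_apply_apply, real_inner_comm, smul_eq_mul, mul_comm]
  exact sub_pos.1 (hsplit ▸ hg_pos.trans_le hprinciple)

theorem norm_le_of_barrier (hα : α ∈ Ico 0 1) (hlam : 0 ≤ lam)
    (he : ContinuousOn e (Icc 0 T)) (he0 : e 0 = 0)
    (he' : ∀ s ∈ Ioo 0 T, HasDerivAt e (e' s) s)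
    (he'_int : ∀ s ∈ Ioc 0 T, CaputoIntegrable α e' s)
    (hB : ContinuousOn B (Icc 0 T)) (hB_nonneg : ∀ s ∈ Icc 0 T, 0 ≤ B s)
    (hB' : ∀ s ∈ Ioo 0 T, HasDerivWithinAt B (B' s) (Ioi s) s)
    (hB'_int : ∀ s ∈ Ioc 0 T, CaputoIntegrable α B' s)
    (hres : ∀ s ∈ Ioc 0 T, ⟪caputoDeriv α e' s, e s⟫ + lam * ‖e s‖ ^ 2 ≤
      (riemannLiouvilleDeriv α B B' s + lam * B s) * ‖e s‖) :
    ∀ t ∈ Icc 0 T, ‖e t‖ ≤ B t := by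
  intro t ht
  by_contra! hlt
  obtain ⟨t₀, ht₀, hmax⟩ := isCompact_Icc.exists_isMaxOn ⟨t, ht⟩ (he.norm.sub hB)
  have hlt₀ : B t₀ < ‖e t₀‖ := sub_pos.1 ((sub_pos.2 hlt).trans_le (hmax ht))
  have ht₀_pos : 0 < t₀ := ht₀.1.lt_of_ne' fun h => by
    have := hB_nonneg t₀ ht₀
    rw [h, he0, norm_zero] at hlt₀
    exact (h ▸ this).not_gt hlt₀
  have hIcc : Icc 0 t₀ ⊆ Icc 0 T := Icc_subset_Icc_right ht₀.2
  have hIoo : Ioo 0 t₀ ⊆ Ioo 0 T := Ioo_subset_Ioo_right ht₀.2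
  have hcaputo := riemannLiouvilleDeriv_mul_norm_lt_inner hα ht₀_pos (he.mono hIcc) he0
    (fun s hs => he' s (hIoo hs)) (he'_int t₀ ⟨ht₀_pos, ht₀.2⟩) (hB.mono hIcc)
    (fun s hs => hB' s (hIoo hs)) (hB'_int t₀ ⟨ht₀_pos, ht₀.2⟩) (hB_nonneg t₀ ht₀)
    (hmax.on_subset hIcc) hlt₀
  have hcoercive : lam * B t₀ * ‖e t₀‖ ≤ lam * ‖e t₀‖ ^ 2 := by
    rw [sq, ← mul_assoc]
    gcongr
  linarith [hres t₀ ⟨ht₀_pos, ht₀.2⟩]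

end Comparison

section Barrier

variable {α β lam s t τ : ℝ}

lemma hasDerivAt_rpow_neg_mul_sub_rpow (hs : 0 < s) (hst : s < t) :
    HasDerivAt (fun s => s ^ (-β) * (t - s) ^ β)
      (-(β * t) * (s ^ (-β - 1) * (t - s) ^ (β - 1))) s := by
  have hts : 0 < t - s := sub_pos.2 hst
  refine ((hasDerivAt_rpow_const (p := -β) (Or.inl hs.ne')).mul
    (((hasDerivAt_id s).const_sub t).rpow_const (p := β) (Or.inl hts.ne'))).congr_deriv ?_
  have hs_rpow : s ^ (-β) = s ^ (-β - 1) * s := by rw [← rpow_add_one hs.ne', sub_add_cancel]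
  have hts_rpow : (t - s) ^ β = (t - s) ^ (β - 1) * (t - s) := by
    rw [← rpow_add_one hts.ne', sub_add_cancel]
  simp only [id_eq]
  rw [hs_rpow, hts_rpow]
  ring

lemma hasDerivAt_primitive_rpow_mul_sub_rpow (hβ : 0 < β) (hs : 0 < s) (hst : s < t) :
    HasDerivAt (fun s => -(s ^ (-β) * (t - s) ^ β) / (β * t))
      (s ^ (-β - 1) * (t - s) ^ (β - 1)) s := by
  have ht : 0 < t := hs.trans hst
  refine ((hasDerivAt_rpow_neg_mul_sub_rpow hs hst).neg.div_const (β * t)).congr_deriv ?_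
  field_simp

lemma continuousOn_primitive_rpow_mul_sub_rpow (hβ : 0 ≤ β) (hτ : 0 < τ) :
    ContinuousOn (fun s => -(s ^ (-β) * (t - s) ^ β) / (β * t)) (Icc τ t) :=
  (((continuousOn_id.rpow_const fun _ hs => Or.inl (hτ.trans_le hs.1).ne').mul
    (ContinuousOn.rpow_const (by fun_prop) fun _ _ => Or.inr hβ)).neg).div_const _

lemma integrableOn_rpow_mul_sub_rpow (hβ : 0 < β) (hτ : 0 < τ) :
    IntegrableOn (fun s => s ^ (-β - 1) * (t - s) ^ (β - 1)) (Ioc τ t) :=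
  intervalIntegral.integrableOn_deriv_of_nonneg
    (continuousOn_primitive_rpow_mul_sub_rpow hβ.le hτ)
    (fun _ hs => hasDerivAt_primitive_rpow_mul_sub_rpow hβ (hτ.trans hs.1) hs.2)
    (fun _ hs => mul_nonneg (rpow_nonneg (hτ.trans hs.1).le _)
      (rpow_nonneg (sub_nonneg.2 hs.2.le) _))

lemma integral_rpow_mul_sub_rpow (hβ : 0 < β) (hτ : 0 < τ) :
    ∫ s in Ioc τ t, s ^ (-β - 1) * (t - s) ^ (β - 1) =
      τ ^ (-β) * max (t - τ) 0 ^ β / (β * t) := by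
  rcases le_total t τ with htτ | hτt
  · rw [Ioc_eq_empty htτ.not_gt, max_eq_right (sub_nonpos.2 htτ), zero_rpow hβ.ne']
    simp
  · rw [← intervalIntegral.integral_of_le hτt,
      intervalIntegral.integral_eq_sub_of_hasDerivAt_of_le hτt
        (continuousOn_primitive_rpow_mul_sub_rpow hβ.le hτ)
        (fun _ hs => hasDerivAt_primitive_rpow_mul_sub_rpow hβ (hτ.trans hs.1) hs.2)
        ((intervalIntegrable_iff_integrableOn_Ioc_of_le hτt).2
          (integrableOn_rpow_mul_sub_rpow hβ hτ)),
      max_eq_left (sub_nonneg.2 hτt), sub_self, zero_rpow hβ.ne']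
    ring

/-- The error barrier `𝓔₁` on `(0, ∞)`, continued to `0` by continuity. The paper's convention
`𝓔₁(0) = 0` is accounted for by applying to it the Riemann–Liouville derivative. -/
noncomputable def errorBarrier (α τ s : ℝ) : ℝ :=
  max τ s ^ (α - 1)

/-- The right derivative of the error barrier, whose graph has a kink at `τ`. -/
noncomputable def errorBarrierDeriv (α τ : ℝ) : ℝ → ℝ :=
  (Ici τ).indicator fun s => (α - 1) * s ^ (α - 2)

/-- The profile `ρ` of the residual barrier. -/
noncomputable def residualProfile (β s : ℝ) : ℝ :=
  s ^ (-β) * (1 - max (1 - s) 0 ^ β)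

/-- The residual barrier `𝓡₁ = D^α 𝓔₁ + λ 𝓔₁` on `(0, ∞)`, with `D^α 𝓔₁` written out by means of the
profile `ρ`. -/
noncomputable def residualBarrier (α lam τ s : ℝ) : ℝ :=
  1 / Gamma (1 - α) * s⁻¹ * residualProfile (1 - α) (τ / s) + lam * errorBarrier α τ s

lemma errorBarrier_pos (hτ : 0 < τ) : 0 < errorBarrier α τ s :=
  rpow_pos_of_pos (lt_max_of_lt_left hτ) _

lemma continuous_errorBarrier (hτ : 0 < τ) : Continuous (errorBarrier α τ) :=
  (continuous_const.max continuous_id).rpow_const fun _ => Or.inl (lt_max_of_lt_left hτ).ne'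

lemma hasDerivWithinAt_errorBarrier (hτ : 0 < τ) :
    HasDerivWithinAt (errorBarrier α τ) (errorBarrierDeriv α τ s) (Ioi s) s := by
  rcases lt_or_ge s τ with hs | hs
  · rw [errorBarrierDeriv, indicator_of_notMem (notMem_Ici.2 hs)]
    refine ((hasDerivAt_const s (τ ^ (α - 1))).congr_of_eventuallyEq ?_).hasDerivWithinAt
    filter_upwards [Iio_mem_nhds hs] with x hx
    rw [errorBarrier, max_eq_left hx.le]
  · rw [errorBarrierDeriv, indicator_of_mem (mem_Ici.2 hs), show α - 2 = α - 1 - 1 by ring]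
    refine (hasDerivAt_rpow_const (Or.inl (hτ.trans_le hs).ne')).hasDerivWithinAt.congr
      (fun x hx => ?_) ?_
    · rw [errorBarrier, max_eq_right (hs.trans hx.le)]
    · rw [errorBarrier, max_eq_right hs]

lemma sub_rpow_smul_errorBarrierDeriv :
    (fun s => (t - s) ^ (-α) • errorBarrierDeriv α τ s) = (Ici τ).indicator
      fun s => (α - 1) * (s ^ (-(1 - α) - 1) * (t - s) ^ (1 - α - 1)) := by
  ext s
  rw [show -(1 - α) - 1 = α - 2 by ring, show 1 - α - 1 = -α by ring]
  by_cases hs : s ∈ Ici τ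
  · simp only [errorBarrierDeriv, indicator_of_mem hs, smul_eq_mul]
    ring
  · simp only [errorBarrierDeriv, indicator_of_notMem hs, smul_zero]

lemma Ioo_inter_Ici_ae_eq_Ioc (hτ : 0 < τ) : (Ioo 0 t ∩ Ici τ : Set ℝ) =ᵐ[volume] Ioc τ t := by
  have hinter : Ioo 0 t ∩ Ici τ = Ico τ t := by
    ext s
    exact ⟨fun hs => ⟨hs.2, hs.1.2⟩, fun hs => ⟨⟨hτ.trans_le hs.1, hs.2⟩, hs.1⟩⟩
  exact hinter ▸ Ico_ae_eq_Ioc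

lemma caputoIntegrable_errorBarrierDeriv (hα : α < 1) (hτ : 0 < τ) :
    CaputoIntegrable α (errorBarrierDeriv α τ) t := by
  rw [CaputoIntegrable, sub_rpow_smul_errorBarrierDeriv, IntegrableOn,
    integrable_indicator_iff measurableSet_Ici, IntegrableOn,
    Measure.restrict_restrict measurableSet_Ici, inter_comm,
    Measure.restrict_congr_set (Ioo_inter_Ici_ae_eq_Ioc hτ)]
  exact (integrableOn_rpow_mul_sub_rpow (sub_pos.2 hα) hτ).const_mul _

lemma integral_sub_rpow_smul_errorBarrierDeriv (hα : α < 1) (hτ : 0 < τ) :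
    ∫ s in Ioo 0 t, (t - s) ^ (-α) • errorBarrierDeriv α τ s =
      -(τ ^ (α - 1) * max (t - τ) 0 ^ (1 - α) / t) := by
  have hβ : 1 - α ≠ 0 := (sub_pos.2 hα).ne'
  rw [sub_rpow_smul_errorBarrierDeriv, setIntegral_indicator measurableSet_Ici,
    setIntegral_congr_set (Ioo_inter_Ici_ae_eq_Ioc hτ), integral_const_mul,
    integral_rpow_mul_sub_rpow (sub_pos.2 hα) hτ, neg_sub, ← neg_sub 1 α]
  field_simp

lemma inv_mul_residualProfile_div (hτ : 0 < τ) (ht : 0 < t) :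
    t⁻¹ * residualProfile β (τ / t) =
      τ ^ (-β) * t ^ (β - 1) - τ ^ (-β) * max (t - τ) 0 ^ β / t := by
  have hmax : max (1 - τ / t) 0 = max (t - τ) 0 / t := by
    rw [← max_div_div_right ht.le, sub_div, div_self ht.ne', zero_div]
  have htβ : t ^ β ≠ 0 := (rpow_pos_of_pos ht β).ne'
  rw [residualProfile, hmax, div_rpow hτ.le ht.le, div_rpow (le_max_right _ _) ht.le,
    rpow_neg ht.le, rpow_sub_one ht.ne']
  field_simp

theorem riemannLiouvilleDeriv_errorBarrier (hα : α < 1) (hτ : 0 < τ) (ht : 0 < t) :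
    riemannLiouvilleDeriv α (errorBarrier α τ) (errorBarrierDeriv α τ) t =
      1 / Gamma (1 - α) * t⁻¹ * residualProfile (1 - α) (τ / t) := by
  have hzero : errorBarrier α τ 0 = τ ^ (α - 1) := by rw [errorBarrier, max_eq_left hτ.le]
  rw [riemannLiouvilleDeriv, caputoDeriv, integral_sub_rpow_smul_errorBarrierDeriv hα hτ, hzero,
    mul_assoc, inv_mul_residualProfile_div hτ ht, neg_sub, show 1 - α - 1 = -α by ring,
    smul_eq_mul, smul_eq_mul]
  ring

lemma riemannLiouvilleDeriv_smul_errorBarrier_add (hα : α < 1) (hτ : 0 < τ) (ht : 0 < t) (c : ℝ) :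
    riemannLiouvilleDeriv α (c • errorBarrier α τ) (c • errorBarrierDeriv α τ) t +
      lam * (c • errorBarrier α τ) t = c * residualBarrier α lam τ t := by
  rw [riemannLiouvilleDeriv_const_smul, riemannLiouvilleDeriv_errorBarrier hα hτ ht,
    residualBarrier, Pi.smul_apply, smul_eq_mul, smul_eq_mul]
  ring

lemma residualProfile_pos (hβ : 0 < β) (hs : 0 < s) : 0 < residualProfile β s := by
  have hlt : max (1 - s) 0 ^ β < 1 :=
    rpow_lt_one (le_max_right _ _) (max_lt (sub_lt_self 1 hs) one_pos) hβ
  exact mul_pos (rpow_pos_of_pos hs _) (sub_pos.2 hlt)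

lemma residualBarrier_pos (hα : α < 1) (hlam : 0 ≤ lam) (hτ : 0 < τ) (hs : 0 < s) :
    0 < residualBarrier α lam τ s := by
  have hβ : 0 < 1 - α := sub_pos.2 hα
  have hρ : 0 < residualProfile (1 - α) (τ / s) := residualProfile_pos hβ (div_pos hτ hs)
  have hE : 0 < errorBarrier α τ s := errorBarrier_pos hτ
  unfold residualBarrier
  positivity

end Barrier

theorem error_bound_R1_general
    {H : Type*} [NormedAddCommGroup H] [InnerProductSpace ℝ H] [CompleteSpace H]
    {α lam τ T : ℝ} (hα : α ∈ Ico 0 1) (hlam : 0 ≤ lam) (hτ : 0 < τ)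
    {e e' : ℝ → H} {r : ℝ → ℝ} (he : ContinuousOn e (Icc 0 T)) (he0 : e 0 = 0)
    (he' : ∀ s ∈ Ioo 0 T, HasDerivAt e (e' s) s)
    (hint : ∀ t ∈ Ioc 0 T, IntegrableOn (fun s => (t - s) ^ (-α) * ‖e' s‖) (Ioo 0 t))
    (hr : ∀ t ∈ Ioc 0 T, 0 ≤ r t)
    (hres : ∀ t ∈ Ioc 0 T,
      (1 / Gamma (1 - α)) * ⟪(∫ s in Ioo 0 t, (t - s) ^ (-α) • e' s), e t⟫
        + lam * ‖e t‖ ^ 2 ≤ r t * ‖e t‖)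
    {R : ℝ → ℝ} (hR : EqOn R (residualBarrier α lam τ) (Ioi 0)) :
    ∀ t ∈ Ioc 0 T, BddAbove ((fun s => r s / R s) '' Ioc 0 t) →
      ‖e t‖ ≤ errorBarrier α τ t * sSup ((fun s => r s / R s) '' Ioc 0 t) := by
  intro t ht hbdd
  set M := sSup ((fun s => r s / R s) '' Ioc 0 t)
  have hR_pos : ∀ s ∈ Ioc 0 t, 0 < R s := fun s hs =>
    hR hs.1 ▸ residualBarrier_pos hα.2 hlam hτ hs.1
  have hM : ∀ s ∈ Ioc 0 t, r s / R s ≤ M := fun s hs => le_csSup hbdd (mem_image_of_mem _ hs)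
  have ht_mem : t ∈ Ioc 0 t := right_mem_Ioc.2 ht.1
  have hM_nonneg : 0 ≤ M := (div_nonneg (hr t ht) (hR_pos t ht_mem).le).trans (hM t ht_mem)
  have hr_le : ∀ s ∈ Ioc 0 t, r s ≤ M * residualBarrier α lam τ s := fun s hs =>
    hR hs.1 ▸ (div_le_iff₀ (hR_pos s hs)).1 (hM s hs)
  have hsub : Ioc 0 t ⊆ Ioc 0 T := Ioc_subset_Ioc_right ht.2
  have hIoo : Ioo 0 t ⊆ Ioo 0 T := Ioo_subset_Ioo_right ht.2
  rw [mul_comm]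
  refine norm_le_of_barrier (B := M • errorBarrier α τ) (B' := M • errorBarrierDeriv α τ)
    hα hlam (he.mono (Icc_subset_Icc_right ht.2)) he0 (fun s hs => he' s (hIoo hs))
    (fun s hs => caputoIntegrable_of_norm
      (fun x hx => he' x (hIoo ⟨hx.1, hx.2.trans_le hs.2⟩)) (hint s (hsub hs)))
    ((continuous_errorBarrier hτ).const_smul M).continuousOn
    (fun s _ => mul_nonneg hM_nonneg (errorBarrier_pos hτ).le)
    (fun s _ => (hasDerivWithinAt_errorBarrier hτ).const_smul M)
    (fun s _ => (caputoIntegrable_errorBarrierDeriv hα.2 hτ).const_smul M)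
    (fun s hs => ?_) t ⟨ht.1.le, le_rfl⟩
  rw [riemannLiouvilleDeriv_smul_errorBarrier_add hα.2 hτ hs.1, caputoDeriv, real_inner_smul_left]
  exact (hres s (hsub hs)).trans (by gcongr; exact hr_le s hs)

end

/-- Second bound of Corollary 2.2: with the residual barrier
`𝓡₁(s) = (1/Γ(1-α)) s⁻¹ ρ(τ/s) + λ 𝓔₁(s)` built from the profile
`ρ(s) = s^(-β)(1 - ((1-s)⁺)^β)`, `β = 1-α`, and the error barrier
`𝓔₁(s) = max{τ, s}^(α-1)`, the error satisfies
`‖e(t)‖ ≤ 𝓔₁(t) · sup_{0 < s ≤ t} r(s)/𝓡₁(s)`, provided the supremum is finite. -/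
theorem error_bound_R1
    {H : Type*} [NormedAddCommGroup H] [InnerProductSpace ℝ H] [CompleteSpace H]
    (α β lam τ T : ℝ) (hα : α ∈ Set.Ioo (0 : ℝ) 1) (hβ : β = 1 - α)
    (hlam : 0 ≤ lam) (hτ : 0 < τ) (hT : 0 < T)
    (e e' : ℝ → H) (r : ℝ → ℝ)
    (he_cont : ContinuousOn e (Set.Icc 0 T))
    (he0 : e 0 = 0)
    (hderiv : ∀ s ∈ Set.Ioo 0 T, HasDerivAt e (e' s) s)
    (hint : ∀ t ∈ Set.Ioc 0 T, IntegrableOn (fun s => (t - s) ^ (-α) * ‖e' s‖) (Set.Ioo 0 t))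
    (hlip : ∀ ε ∈ Set.Ioo 0 T, ∃ K : NNReal, LipschitzOnWith K (fun s => ‖e s‖) (Set.Icc ε T))
    (hr_nonneg : ∀ t ∈ Set.Ioc 0 T, 0 ≤ r t)
    (hr_cont : ContinuousOn r (Set.Ioc 0 T))
    (hres : ∀ t ∈ Set.Ioc 0 T,
      (1 / Real.Gamma (1 - α)) * ⟪(∫ s in Set.Ioo 0 t, (t - s) ^ (-α) • e' s), e t⟫
        + lam * ‖e t‖ ^ 2 ≤ r t * ‖e t‖)
    (ρ E₁ R₁ : ℝ → ℝ)
    (hρ : ∀ s : ℝ, 0 < s → ρ s = s ^ (-β) * (1 - max (1 - s) 0 ^ β))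
    (hE₁ : ∀ s : ℝ, 0 < s → E₁ s = max τ s ^ (α - 1))
    (hR₁ : ∀ s : ℝ, 0 < s → R₁ s = (1 / Real.Gamma (1 - α)) * s⁻¹ * ρ (τ / s) + lam * E₁ s) :
    ∀ t ∈ Set.Ioc 0 T,
      BddAbove ((fun s => r s / R₁ s) '' Set.Ioc 0 t) →
      ‖e t‖ ≤ max τ t ^ (α - 1) * sSup ((fun s => r s / R₁ s) '' Set.Ioc 0 t) :=
  error_bound_R1_general ⟨hα.1.le, hα.2⟩ hlam hτ he_cont he0 hderiv hint hr_nonneg hres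
    fun s hs => by rw [hR₁ s hs, hE₁ s hs, hρ _ (div_pos hτ hs), hβ]; rfl
end

section
/- Let α ∈ (0,1) and t > 0. Let φ : [0,t] → ℝ be continuous, differentiable on (0,t), with s ↦ (t−s)^{−α}|φ′(s)| integrable on (0,t). If φ(s) ≤ φ(t) for all s ∈ [0,t] (i.e., φ attains its maximum over [0,t] at the endpoint t), then ∫_0^t (t−s)^{−α} φ′(s) ds ≥ 0; that is, the Caputo fractional derivative D_t^α φ(t) = (1/Γ(1−α)) ∫_0^t (t−s)^{−α} φ′(s) ds is nonnegative. -/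
open MeasureTheory Real

/-!
Write the nonnegative increasing kernel `k s = (t - s) ^ (-α)` as the superposition
`k s = ∫ u in Ioi 0, 1_{u < k s}` of its superlevel sets. Each of these is, up to an endpoint, an
interval `(c, t)`, over which `φ'` integrates to `φ t - φ c ≥ 0`. Splitting `φ'` into positive and
negative parts keeps the exchange of integrals within Tonelli's theorem.
-/

section Superlevel

variable {X : Type*} [MeasurableSpace X] {μ : Measure X} {f g : X → ℝ}

theorem lintegral_mul_ofReal_eq_lintegral_superlevel {w : X → ENNReal} (hf0 : 0 ≤ᵐ[μ] f)
    (hf : AEMeasurable f μ) (hw : AEMeasurable w μ) :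
    ∫⁻ x, w x * ENNReal.ofReal (f x) ∂μ =
      ∫⁻ u in Set.Ioi (0 : ℝ), ∫⁻ x in {x | u < f x}, w x ∂μ := by
  have hac : μ.withDensity w ≪ μ := withDensity_absolutelyContinuous μ w
  calc ∫⁻ x, w x * ENNReal.ofReal (f x) ∂μ
      = ∫⁻ x, ENNReal.ofReal (f x) ∂μ.withDensity w :=
        (lintegral_withDensity_eq_lintegral_mul₀ hw hf.ennreal_ofReal).symm
    _ = ∫⁻ u in Set.Ioi (0 : ℝ), μ.withDensity w {x | u < f x} :=
        lintegral_eq_lintegral_meas_lt _ (hac.ae_le hf0) (hf.mono_ac hac)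
    _ = ∫⁻ u in Set.Ioi (0 : ℝ), ∫⁻ x in {x | u < f x}, w x ∂μ := by
        simp only [withDensity_apply₀ w (nullMeasurableSet_lt aemeasurable_const hf)]

theorem integral_nonneg_iff_lintegral_ofReal_neg_le (hg : Integrable g μ) :
    0 ≤ ∫ x, g x ∂μ ↔
      ∫⁻ x, ENNReal.ofReal (-g x) ∂μ ≤ ∫⁻ x, ENNReal.ofReal (g x) ∂μ := by
  rw [integral_eq_lintegral_pos_part_sub_lintegral_neg_part hg, sub_nonneg]
  exact ENNReal.toReal_le_toReal hg.neg.lintegral_lt_top.ne hg.lintegral_lt_top.ne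

theorem integrableOn_superlevel_of_integrable_smul {E : Type*} [NormedAddCommGroup E]
    [NormedSpace ℝ E] {v : X → E} (hf : AEMeasurable f μ) (hv : AEStronglyMeasurable v μ)
    (hfv : Integrable (fun x ↦ f x • v x) μ) {u : ℝ} (hu : 0 < u) :
    IntegrableOn v {x | u < f x} μ := by
  have hS : NullMeasurableSet {x | u < f x} μ := nullMeasurableSet_lt aemeasurable_const hf
  refine (hfv.integrableOn.smul u⁻¹).mono hv.restrict ?_
  filter_upwards [ae_restrict_mem₀ hS] with x (hx : u < f x)
  have hratio : 1 ≤ ‖u⁻¹ * f x‖ := by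
    rw [inv_mul_eq_div]
    exact ((one_le_div hu).2 hx.le).trans (le_norm_self _)
  rw [Pi.smul_apply, smul_smul, norm_smul]
  exact le_mul_of_one_le_left (norm_nonneg _) hratio

theorem integral_mul_nonneg_of_setIntegral_superlevel_nonneg (hf0 : 0 ≤ᵐ[μ] f)
    (hf : AEMeasurable f μ) (hg : AEStronglyMeasurable g μ)
    (hfg : Integrable (fun x ↦ f x * g x) μ)
    (hlevel : ∀ u, 0 < u → 0 ≤ ∫ x in {x | u < f x}, g x ∂μ) :
    0 ≤ ∫ x, f x * g x ∂μ := by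
  have layers {h : X → ℝ} (hh : AEMeasurable h μ) :
      ∫⁻ x, ENNReal.ofReal (f x * h x) ∂μ =
        ∫⁻ u in Set.Ioi (0 : ℝ), ∫⁻ x in {x | u < f x}, ENNReal.ofReal (h x) ∂μ := by
    rw [← lintegral_mul_ofReal_eq_lintegral_superlevel hf0 hf hh.ennreal_ofReal]
    refine lintegral_congr_ae (hf0.mono fun x hx ↦ ?_)
    dsimp only
    rw [ENNReal.ofReal_mul hx, mul_comm]
  rw [integral_nonneg_iff_lintegral_ofReal_neg_le hfg]
  simp only [← mul_neg]
  rw [layers (h := fun x ↦ -g x) hg.aemeasurable.neg, layers hg.aemeasurable]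
  exact setLIntegral_mono' measurableSet_Ioi fun u hu ↦
    (integral_nonneg_iff_lintegral_ofReal_neg_le
      (integrableOn_superlevel_of_integrable_smul hf hg hfg hu)).1 (hlevel u hu)

end Superlevel

section UpperInterval

variable {β : Type*} [ConditionallyCompleteLinearOrder β] {a b : β}

theorem exists_Ioo_subset_subset_Ico {S : Set β} (hab : a ≤ b) (hS : S ⊆ Set.Ioo a b)
    (hup : ∀ x ∈ S, Set.Ioo x b ⊆ S) :
    ∃ c ∈ Set.Icc a b, Set.Ioo c b ⊆ S ∧ S ⊆ Set.Ico c b := by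
  -- Inserting `b` makes the infimum equal to `b` when `S` is empty.
  have hlower : a ∈ lowerBounds (insert b S) :=
    Set.forall_mem_insert.2 ⟨hab, fun x hx ↦ (hS hx).1.le⟩
  have hbdd : BddBelow (insert b S) := ⟨a, hlower⟩
  refine ⟨sInf (insert b S), ⟨le_csInf (Set.insert_nonempty b S) hlower,
    csInf_le hbdd (Set.mem_insert b S)⟩, fun x hx ↦ ?_,
    fun x hx ↦ ⟨csInf_le hbdd (Set.mem_insert_of_mem b hx), (hS hx).2⟩⟩
  obtain ⟨y, rfl | hy, hyx⟩ := exists_lt_of_csInf_lt (Set.insert_nonempty b S) hx.1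
  · exact absurd hx.2 hyx.not_gt
  · exact hup y hy ⟨hyx, hx.2⟩

theorem exists_restrict_Ioo_restrict_superlevel_eq [TopologicalSpace β] [OrderTopology β]
    [MeasurableSpace β] [OpensMeasurableSpace β] (μ : Measure β) [NullSingletonClass μ]
    {γ : Type*} [Preorder γ] {k : β → γ} (hk : MonotoneOn k (Set.Ioo a b)) (hab : a ≤ b)
    (u : γ) :
    ∃ c ∈ Set.Icc a b,
      (μ.restrict (Set.Ioo a b)).restrict {s | u < k s} = μ.restrict (Set.Ioo c b) := by
  obtain ⟨c, hc, hsub, hsup⟩ := exists_Ioo_subset_subset_Ico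
    (S := {s | u < k s} ∩ Set.Ioo a b) hab Set.inter_subset_right fun x hx y hy ↦
      have hy' : y ∈ Set.Ioo a b := ⟨hx.2.1.trans hy.1, hy.2⟩
      ⟨lt_of_lt_of_le hx.1 (hk hx.2 hy' hy.1.le), hy'⟩
  refine ⟨c, hc, ?_⟩
  rw [Measure.restrict_restrict' measurableSet_Ioo]
  exact Measure.restrict_congr_set <|
    (hsup.eventuallyLE.trans Ioo_ae_eq_Ico.symm.le).antisymm hsub.eventuallyLE

end UpperInterval

theorem aestronglyMeasurable_restrict_of_hasDerivAt {𝕜 F : Type*} [NontriviallyNormedField 𝕜]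
    [LocallyCompactSpace 𝕜] [MeasurableSpace 𝕜] [OpensMeasurableSpace 𝕜] [NormedAddCommGroup F]
    [NormedSpace 𝕜 F] [CompleteSpace F] [SecondCountableTopologyEither 𝕜 F] {φ φ' : 𝕜 → F}
    {S : Set 𝕜} (hS : MeasurableSet S) (hderiv : ∀ s ∈ S, HasDerivAt φ (φ' s) s)
    (μ : Measure 𝕜) :
    AEStronglyMeasurable φ' (μ.restrict S) := by
  refine (aestronglyMeasurable_deriv φ _).congr ?_
  filter_upwards [ae_restrict_mem hS] with s hs using (hderiv s hs).deriv

theorem setIntegral_Ioo_eq_sub_of_hasDerivAt_s12 {F : Type*} [NormedAddCommGroup F]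
    [NormedSpace ℝ F] [CompleteSpace F] {φ φ' : ℝ → F} {a b : ℝ} (hab : a ≤ b)
    (hcont : ContinuousOn φ (Set.Icc a b)) (hderiv : ∀ s ∈ Set.Ioo a b, HasDerivAt φ (φ' s) s)
    (hint : IntegrableOn φ' (Set.Ioo a b)) :
    ∫ s in Set.Ioo a b, φ' s = φ b - φ a := by
  rw [← integral_Ioc_eq_integral_Ioo, ← intervalIntegral.integral_of_le hab]
  exact intervalIntegral.integral_eq_sub_of_hasDerivAt_of_le hab hcont hderiv
    ((intervalIntegrable_iff_integrableOn_Ioo_of_le hab).2 hint)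

theorem monotoneOn_const_sub_rpow_neg {α : ℝ} (hα : 0 ≤ α) (t : ℝ) :
    MonotoneOn (fun s ↦ (t - s) ^ (-α)) (Set.Iio t) := fun _ _ _ hs hrs ↦
  rpow_le_rpow_of_nonpos (sub_pos.2 hs) (sub_le_sub_left hrs t) (neg_nonpos.2 hα)

theorem caputo_nonneg_at_max_general {a b : ℝ} (hab : a ≤ b) {k φ φ' : ℝ → ℝ}
    (hk : MonotoneOn k (Set.Ioo a b)) (hk0 : ∀ s ∈ Set.Ioo a b, 0 ≤ k s)
    (hcont : ContinuousOn φ (Set.Icc a b))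
    (hderiv : ∀ s ∈ Set.Ioo a b, HasDerivAt φ (φ' s) s)
    (hint : IntegrableOn (fun s ↦ k s * |φ' s|) (Set.Ioo a b))
    (hmax : ∀ s ∈ Set.Icc a b, φ s ≤ φ b) :
    0 ≤ ∫ s in Set.Ioo a b, k s * φ' s := by
  have hkmeas : AEMeasurable k (volume.restrict (Set.Ioo a b)) :=
    aemeasurable_restrict_of_monotoneOn measurableSet_Ioo hk
  have hφ'meas : AEStronglyMeasurable φ' (volume.restrict (Set.Ioo a b)) :=
    aestronglyMeasurable_restrict_of_hasDerivAt measurableSet_Ioo hderiv volume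
  have hkφ' : IntegrableOn (fun s ↦ k s * φ' s) (Set.Ioo a b) :=
    Integrable.mono hint (hkmeas.aestronglyMeasurable.mul hφ'meas) <| .of_forall fun s ↦ by
      simp only [norm_mul, norm_eq_abs, abs_abs, le_refl]
  refine integral_mul_nonneg_of_setIntegral_superlevel_nonneg
    (ae_restrict_of_forall_mem measurableSet_Ioo hk0) hkmeas hφ'meas hkφ' fun u hu ↦ ?_
  have hφ'int := integrableOn_superlevel_of_integrable_smul hkmeas hφ'meas hkφ' hu
  obtain ⟨c, hc, hrestrict⟩ := exists_restrict_Ioo_restrict_superlevel_eq volume hk hab u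
  rw [IntegrableOn, hrestrict] at hφ'int
  rw [hrestrict, setIntegral_Ioo_eq_sub_of_hasDerivAt_s12 hc.2
    (hcont.mono (Set.Icc_subset_Icc_left hc.1))
    (fun s hs ↦ hderiv s (Set.Ioo_subset_Ioo_left hc.1 hs)) hφ'int]
  exact sub_nonneg.2 (hmax c hc)

/-- Extremum principle for the Caputo fractional derivative: if `φ` attains its
maximum over `[0,t]` at the endpoint `t`, then
`Γ(1-α) D_t^α φ(t) = ∫_0^t (t-s)^(-α) φ'(s) ds ≥ 0`. -/
theorem caputo_nonneg_at_max (α t : ℝ) (hα : α ∈ Set.Ioo (0 : ℝ) 1) (ht : 0 < t)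
    (φ φ' : ℝ → ℝ)
    (hcont : ContinuousOn φ (Set.Icc 0 t))
    (hderiv : ∀ s ∈ Set.Ioo 0 t, HasDerivAt φ (φ' s) s)
    (hint : IntegrableOn (fun s => (t - s) ^ (-α) * |φ' s|) (Set.Ioo 0 t))
    (hmax : ∀ s ∈ Set.Icc 0 t, φ s ≤ φ t) :
    0 ≤ ∫ s in Set.Ioo 0 t, (t - s) ^ (-α) * φ' s := by
  exact caputo_nonneg_at_max_general ht.le
    ((monotoneOn_const_sub_rpow_neg hα.1.le t).mono Set.Ioo_subset_Iio_self)
    (fun s hs ↦ rpow_nonneg (sub_nonneg.2 hs.2.le) _) hcont hderiv hint hmax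
end
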